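/- arXiv:2203.00726 — 7 statements merged into one kernel-verified Lean document; each statement's English description precedes it below -/
import Mathlib

section
/- Let G be a finite nilpotent group and X a subset of G. Then X invariably generates G if and only if X generates G. -/
/-! Conjugating elements does not change their images in the abelianization, and a subgroup of a
nilpotent group `G` that surjects onto `G ⧸ [G, G]` is all of `G`. Hence whether a set generates `G`
can be read off in the abelianization, where invariable generation and generation coincide.
-/

/-- A subset `S` invariably generates `G` if for every choice of conjugators
(one for each element), the conjugated set generates `G`. -/
def InvGen {G : Type*} [Group G] (S : Set G) : Prop :=
  ∀ σ : G → G, Subgroup.closure ((fun g => (σ g)⁻¹ * g * σ g) '' S) = ⊤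

/-- `S` is a minimal invariable generating set of `G`. -/
def MinInvGen {G : Type*} [Group G] (S : Set G) : Prop :=
  InvGen S ∧ ∀ T : Set G, T ⊂ S → ¬ InvGen T

/-- `S` is a minimal generating set of `G`. -/
def MinGen {G : Type*} [Group G] (S : Set G) : Prop :=
  Subgroup.closure S = ⊤ ∧ ∀ T : Set G, T ⊂ S → Subgroup.closure T ≠ ⊤

/-- `m(G)`: largest cardinality of a minimal generating set of `G`. -/
noncomputable def mGen (G : Type*) [Group G] : ℕ :=
  sSup {n : ℕ | ∃ S : Set G, MinGen S ∧ S.ncard = n}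

/-- `m_I(G)`: largest cardinality of a minimal invariable generating set of `G`. -/
noncomputable def mInv (G : Type*) [Group G] : ℕ :=
  sSup {n : ℕ | ∃ S : Set G, MinInvGen S ∧ S.ncard = n}

/-- `d_I(G)`: smallest cardinality of a minimal invariable generating set of `G`. -/
noncomputable def dInv (G : Type*) [Group G] : ℕ :=
  sInf {n : ℕ | ∃ S : Set G, MinInvGen S ∧ S.ncard = n}

/-- The union of all conjugates of a subgroup `M`, as a set. -/
def conjUnion {G : Type*} [Group G] (M : Subgroup G) : Set G :=
  ⋃ g : G, (fun m => g⁻¹ * m * g) '' (M : Set G)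

section

variable {G : Type*} [Group G]

theorem commutator_le_of_sup_center_eq_top {H : Subgroup G}
    (h : H ⊔ Subgroup.center G = ⊤) : commutator G ≤ H := by
  have hnormal : H.Normal := by
    rw [← Subgroup.normalizer_eq_top_iff, eq_top_iff, ← h]
    exact sup_le Subgroup.le_normalizer (Subgroup.center_le_normalizer _)
  exact hnormal.commutator_le_of_self_sup_commutative_eq_top h inferInstance

theorem eq_top_of_sup_commutator_eq_top [Group.IsNilpotent G] {H : Subgroup G}
    (h : H ⊔ commutator G = ⊤) : H = ⊤ := by
  revert H
  refine Group.nilpotent_center_quotient_ind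
    (P := fun G _ _ => ∀ {H : Subgroup G}, H ⊔ commutator G = ⊤ → H = ⊤) G ?_ ?_
  · intro G _ _ H _
    exact Subsingleton.elim _ _
  · intro G _ _ ih H h
    let π := QuotientGroup.mk' (Subgroup.center G)
    have hπ : Function.Surjective π := QuotientGroup.mk'_surjective _
    have hmap_commutator : (commutator G).map π = commutator (G ⧸ Subgroup.center G) := by
      rw [map_commutator_eq, MonoidHom.range_eq_top.mpr hπ, commutator_def]
    have hmap : H.map π = ⊤ := by
      apply ih
      rw [← hmap_commutator, ← Subgroup.map_sup, h, Subgroup.map_top_of_surjective π hπ]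
    have hcenter : H ⊔ Subgroup.center G = ⊤ := by
      rw [← QuotientGroup.ker_mk' (Subgroup.center G), ← Subgroup.comap_map_eq, hmap,
        Subgroup.comap_top]
    rwa [sup_eq_left.mpr (commutator_le_of_sup_center_eq_top hcenter)] at h

theorem map_abelianization_of_eq_top_iff [Group.IsNilpotent G] {H : Subgroup G} :
    H.map Abelianization.of = ⊤ ↔ H = ⊤ := by
  refine ⟨fun h => eq_top_of_sup_commutator_eq_top ?_, ?_⟩
  · rw [← Abelianization.ker_of, ← Subgroup.comap_map_eq, h, Subgroup.comap_top]
  · rintro rfl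
    exact Subgroup.map_top_of_surjective _ (QuotientGroup.mk'_surjective _)

theorem map_closure_image_conj {A : Type*} [CommGroup A] (f : G →* A) (σ : G → G) (X : Set G) :
    (Subgroup.closure ((fun g => (σ g)⁻¹ * g * σ g) '' X)).map f =
      (Subgroup.closure X).map f := by
  have hconj (g : G) : f ((σ g)⁻¹ * g * σ g) = f g := by
    rw [map_mul, map_mul, map_inv, mul_right_comm, inv_mul_cancel, one_mul]
  simp only [MonoidHom.map_closure, Set.image_image, hconj]

end

theorem stmt1_general {G : Type*} [Group G] [Group.IsNilpotent G] (X : Set G) :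
    InvGen X ↔ Subgroup.closure X = ⊤ := by
  simp only [InvGen, ← map_abelianization_of_eq_top_iff (G := G), map_closure_image_conj,
    forall_const]

/-- For a finite nilpotent group `G` and `X ⊆ G`, `X` invariably
generates `G` iff `X` generates `G`. -/
theorem stmt1 {G : Type*} [Group G] [Finite G] [Group.IsNilpotent G] (X : Set G) :
    InvGen X ↔ Subgroup.closure X = ⊤ :=
  stmt1_general X
end

section
/- Let G be a finite group, N an abelian normal subgroup of G, and π : G → G/N the natural projection. Let X be a subset of G such that π(X) invariably generates G/N, and let Y be a subset of N whose normal closure in G equals N (i.e., Y generates N as a G-module). Then X ∪ Y invariably generates G. -/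
section InvGen

variable {G K : Type*} [Group G] [Group K] {S : Set G} {H : Subgroup G}

theorem invGen_iff_forall_subgroup_eq_top :
    InvGen S ↔ ∀ H : Subgroup G, (∀ s ∈ S, ∃ h ∈ H, IsConj s h) → H = ⊤ := by
  refine ⟨fun hS H hH => ?_, fun hS σ => hS _ fun s hs => ?_⟩
  · have hconj : ∀ s, ∃ c, s ∈ S → c⁻¹ * s * c ∈ H := fun s => by
      by_cases hs : s ∈ S
      · obtain ⟨h, hh, hsh⟩ := hH s hs
        obtain ⟨c, rfl⟩ := isConj_iff.mp hsh
        exact ⟨c⁻¹, fun _ => by rwa [inv_inv]⟩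
      · exact ⟨1, fun hs' => absurd hs' hs⟩
    choose σ hσ using hconj
    rw [eq_top_iff, ← hS σ, Subgroup.closure_le]
    exact Set.image_subset_iff.mpr hσ
  · exact ⟨_, Subgroup.subset_closure (Set.mem_image_of_mem _ hs),
      isConj_iff.mpr ⟨(σ s)⁻¹, by rw [inv_inv]⟩⟩

theorem InvGen.sup_ker_eq_top {f : G →* K} (hS : InvGen (f '' S))
    (hH : ∀ s ∈ S, ∃ h ∈ H, IsConj s h) : H ⊔ f.ker = ⊤ := by
  have hmap : H.map f = ⊤ := by
    refine invGen_iff_forall_subgroup_eq_top.mp hS _ (Set.forall_mem_image.mpr fun s hs => ?_)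
    obtain ⟨h, hh, hsh⟩ := hH s hs
    exact ⟨f h, Subgroup.mem_map_of_mem f hh, f.map_isConj hsh⟩
  rw [← Subgroup.comap_map_eq, hmap, Subgroup.comap_top]

end InvGen

section NormalSubgroup

variable {G : Type*} [Group G] {H N : Subgroup G} [N.Normal] {Y : Set G}

theorem inf_normal_of_sup_eq_top [IsMulCommutative N] (hHN : H ⊔ N = ⊤) : (H ⊓ N).Normal := by
  have hH : H ≤ Subgroup.normalizer (H ⊓ N : Subgroup G) :=
    (le_inf Subgroup.le_normalizer Subgroup.le_normalizer_of_normal).trans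
      Subgroup.inf_normalizer_le_normalizer_inf
  have hN : N ≤ Subgroup.normalizer (H ⊓ N : Subgroup G) :=
    calc N ≤ Subgroup.centralizer N := N.le_centralizer
      _ ≤ Subgroup.centralizer (H ⊓ N : Subgroup G) := Subgroup.centralizer_le inf_le_right
      _ ≤ Subgroup.normalizer (H ⊓ N : Subgroup G) := Subgroup.centralizer_le_normalizer _
  rw [← Subgroup.normalizer_eq_top_iff, eq_top_iff, ← hHN]
  exact sup_le hH hN

theorem normalClosure_le_of_forall_exists_isConj (hY : ∀ y ∈ Y, ∃ n ∈ N, IsConj y n) :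
    Subgroup.normalClosure Y ≤ N := by
  refine Subgroup.normalClosure_le_normal fun y hy => ?_
  obtain ⟨n, hn, hyn⟩ := hY y hy
  exact Group.conjugates_subset_normal hn hyn.symm

end NormalSubgroup

theorem stmt2_general {G : Type*} [Group G] (N : Subgroup G) [N.Normal] [IsMulCommutative N]
    (X : Set G) (hX : InvGen (QuotientGroup.mk' N '' X))
    (Y : Set G) (hY : Subgroup.normalClosure Y = N) : InvGen (X ∪ Y) := by
  refine invGen_iff_forall_subgroup_eq_top.mpr fun H hH => ?_
  have hHN : H ⊔ N = ⊤ := by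
    simpa only [QuotientGroup.ker_mk'] using hX.sup_ker_eq_top fun x hx => hH x (Or.inl hx)
  have : (H ⊓ N).Normal := inf_normal_of_sup_eq_top hHN
  have hYHN : ∀ y ∈ Y, ∃ n ∈ H ⊓ N, IsConj y n := fun y hy => by
    obtain ⟨h, hh, hyh⟩ := hH y (Or.inr hy)
    have hyN : y ∈ N := hY ▸ Subgroup.subset_normalClosure hy
    exact ⟨h, ⟨hh, Group.conjugates_subset_normal hyN hyh⟩, hyh⟩
  have hNH : N ≤ H :=
    calc N = Subgroup.normalClosure Y := hY.symm
      _ ≤ H ⊓ N := normalClosure_le_of_forall_exists_isConj hYHN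
      _ ≤ H := inf_le_left
  rwa [sup_eq_left.mpr hNH] at hHN

/-- If `N` is an abelian normal subgroup of a finite group `G`,
`π(X)` invariably generates `G/N`, and `Y ⊆ N` generates `N` as a `G`-module
(i.e. the normal closure of `Y` in `G` is `N`), then `X ∪ Y` invariably
generates `G`. -/
theorem stmt2 {G : Type*} [Group G] [Finite G] (N : Subgroup G) [N.Normal]
    (habelian : ∀ x ∈ N, ∀ y ∈ N, x * y = y * x)
    (X : Set G) (hX : InvGen ((QuotientGroup.mk' N) '' X))
    (Y : Set G) (hYN : Y ⊆ (N : Set G)) (hY : Subgroup.normalClosure Y = N) :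
    InvGen (X ∪ Y) := by
  have : IsMulCommutative N := ⟨⟨fun x y => Subtype.ext (habelian x x.2 y y.2)⟩⟩
  exact stmt2_general N X hX Y hY
end

section
/- Let G = Alt(29), the alternating group on 29 points, and consider the elements a = (2,3,4)(5,6,7)(8,9,10,11,12,13,14,15,16,17,18)(19,20,21,22,23,24,25,26,27,28,29), b = (1,2)(3,4)(5,6,7,8,9,10,11,12,13,14,15,16,17,18,19,20,21,22,23,24,25,26,27,28,29), and c = (1,2)(3,4,5,6,7,8)(9,10,11,12,13,14,15,16,17,18,19,20,21,22,23,24,25,26,27,28,29). Then {a, b, c} is a minimal invariable generating set of G, but for every x, y, z ∈ G the set {x⁻¹ax, y⁻¹by, z⁻¹cz} is not a minimal generating set of G. -/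
/-- A subset `S` of the subgroup `K` invariably generates `K` if for every choice
of conjugators in `K` (one for each element), the conjugated set generates `K`. -/
def InvGenIn {G : Type*} [Group G] (K : Subgroup G) (S : Set G) : Prop :=
  ∀ σ : G → G, (∀ g, σ g ∈ K) →
    Subgroup.closure ((fun g => (σ g)⁻¹ * g * σ g) '' S) = K

/-- `S` is a minimal invariable generating set of the subgroup `K`. -/
def MinInvGenIn {G : Type*} [Group G] (K : Subgroup G) (S : Set G) : Prop :=
  InvGenIn K S ∧ ∀ T : Set G, T ⊂ S → ¬ InvGenIn K T

/-- `S` is a minimal generating set of the subgroup `K`. -/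
def MinGenIn {G : Type*} [Group G] (K : Subgroup G) (S : Set G) : Prop :=
  Subgroup.closure S = K ∧ ∀ T : Set G, T ⊂ S → Subgroup.closure T ≠ K

namespace InvariableGeneration

open Equiv Equiv.Perm MulAction Finset
open scoped Pointwise commutatorElement

section Action

variable {G X : Type*} [Group G] [MulAction G X]

theorem isBlock_setOf_of_smul_invariant [Finite X] [IsPretransitive G X] {r : X → X → Prop}
    (htrans : ∀ a b c, r a b → r b c → r a c)
    (hsmul : ∀ (g : G) a b, r a b → r (g • a) (g • b)) (a : X) : IsBlock G {b | r a b} := by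
  have himage (g : G) (a : X) : g • {b | r a b} = {b | r (g • a) b} := by
    ext b
    rw [Set.mem_smul_set_iff_inv_smul_mem]
    exact ⟨fun h => by simpa using hsmul g _ _ h, fun h => by simpa using hsmul g⁻¹ _ _ h⟩
  have heq {a b : X} (hab : r a b) : {c | r b c} = {c | r a c} := by
    obtain ⟨g, rfl⟩ := exists_smul_eq G a b
    refine Set.eq_of_subset_of_ncard_le (fun c => htrans _ _ c hab) ?_ (Set.toFinite _)
    rw [← himage, Set.ncard_smul_set]
  rw [isBlock_iff_smul_eq_of_nonempty]
  rintro g ⟨b, hgb, hab⟩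
  rw [himage] at hgb ⊢
  exact (heq hgb).symm.trans (heq hab)

theorem eq_of_forall_isConj_fixed [Finite X] [IsPreprimitive G X] {x : G} {p m : X}
    (hp : x • p = p) (hm : x • m ≠ m) {a b : X}
    (hab : ∀ y, IsConj x y → y • a = a → y • b = b) : a = b := by
  let r : X → X → Prop := fun a b => ∀ y, IsConj x y → y • a = a → y • b = b
  have hsmul (g : G) (a b : X) (h : r a b) : r (g • a) (g • b) := by
    intro y hy hya
    have hconj : IsConj x (g⁻¹ * y * g) := hy.trans (isConj_iff.2 ⟨g⁻¹, by rw [inv_inv]⟩)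
    have hb : (g⁻¹ * y * g) • b = b := h _ hconj (by
      rw [mul_smul, mul_smul, hya, inv_smul_smul])
    rwa [mul_smul, mul_smul, inv_smul_eq_iff] at hb
  have hblock : IsBlock G {b | r a b} :=
    isBlock_setOf_of_smul_invariant
      (fun _ _ _ hab hbc y hy h => hbc y hy (hab y hy h)) hsmul a
  rcases IsPreprimitive.isTrivialBlock_of_isBlock hblock with hsub | huniv
  · exact hsub (fun _ _ h => h) hab
  · obtain ⟨g, rfl⟩ := exists_smul_eq G p a
    have hgm : r (g • p) (g • m) := huniv.ge (Set.mem_univ _)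
    have hfix : (g * x * g⁻¹) • g • m = g • m := hgm _ (isConj_iff.2 ⟨g, rfl⟩) (by
      rw [mul_smul, mul_smul, inv_smul_smul, hp])
    rw [mul_smul, mul_smul, inv_smul_smul, smul_left_cancel_iff] at hfix
    exact absurd hfix hm

theorem exists_disjoint_smul [DecidableEq X] (D E : Finset X)
    (horbit : ∀ i ∈ D, #D * #E < (orbit G i).ncard) : ∃ g : G, Disjoint (g • D) E := by
  -- Otherwise `G` is covered by the `#D * #E` cosets `{g | g • i = j}` with `i ∈ D`, `j ∈ E`, and
  -- by B. H. Neumann's lemma one of the stabilizers has index at most `#D * #E`.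
  by_contra! hcon
  have hmeet (g : G) : ∃ i ∈ D, g • i ∈ E := by
    obtain ⟨j, hjD, hjE⟩ := not_disjoint_iff.1 (hcon g)
    obtain ⟨i, hi, rfl⟩ := mem_smul_finset.1 hjD
    exact ⟨i, hi, hjE⟩
  classical
  let s : Finset (X × X) := {p ∈ D ×ˢ E | p.2 ∈ orbit G p.1}
  have hs (p : X × X) : ∃ g : G, p ∈ s → g • p.1 = p.2 := by
    by_cases hp : p ∈ s
    · obtain ⟨g, hg⟩ := (mem_filter.1 hp).2
      exact ⟨g, fun _ => hg⟩
    · exact ⟨1, fun h => absurd h hp⟩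
  choose g hg using hs
  have hcover : ⋃ p ∈ s, g p • (stabilizer G p.1 : Set G) = Set.univ := by
    refine Set.eq_univ_of_forall fun h => ?_
    obtain ⟨i, hi, hhi⟩ := hmeet h
    have his : (i, h • i) ∈ s := mem_filter.2 ⟨mem_product.2 ⟨hi, hhi⟩, h, rfl⟩
    refine Set.mem_biUnion his ((mem_leftCoset_iff _).2 ?_)
    rw [SetLike.mem_coe, mem_stabilizer_iff, mul_smul, inv_smul_eq_iff]
    exact (hg _ his).symm
  obtain ⟨p, hp, -, hindex⟩ := Subgroup.exists_index_le_card_of_leftCoset_cover hcover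
  rw [index_stabilizer] at hindex
  have hcard : #s ≤ #D * #E := (card_filter_le _ _).trans (card_product D E).le
  exact absurd (hindex.trans hcard) (horbit p.1 (mem_product.1 (mem_filter.1 hp).1).1).not_ge

theorem orbit_stabilizer_subset_compl {q i : X} (hqi : q ≠ i) :
    orbit (stabilizer G q) i ⊆ {q}ᶜ := by
  rintro _ ⟨⟨g, hg⟩, rfl⟩ hgi
  exact hqi (smul_left_cancel g (hg.trans (Eq.symm hgi)))

theorem is_two_pretransitive_of_forall_mem_orbit [IsPretransitive G X]
    (h : ∀ q i j : X, q ≠ i → q ≠ j → j ∈ orbit (stabilizer G q) i) :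
    IsMultiplyPretransitive G X 2 := by
  refine is_two_pretransitive_iff.2 fun {a b c d} hab hcd => ?_
  obtain ⟨g, rfl⟩ := exists_smul_eq G a c
  obtain ⟨⟨k, hk⟩, rfl⟩ := h (g • a) (g • b) d (mt (smul_left_cancel g) hab) hcd
  exact ⟨k * g, (mul_smul k g a).trans hk, mul_smul k g b⟩

theorem orbit_stabilizer_eq_compl (hG : IsMultiplyPretransitive G X 2) {q i : X} (hqi : q ≠ i) :
    orbit (stabilizer G q) i = {q}ᶜ := by
  refine (orbit_stabilizer_subset_compl hqi).antisymm fun j hj => ?_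
  obtain ⟨g, hgq, hgi⟩ := is_two_pretransitive_iff.1 hG hqi (Ne.symm hj)
  exact ⟨⟨g, hgq⟩, hgi⟩

theorem smul_orbit_stabilizer {y : G} {q : X} (hy : y • q = q) (i : X) :
    y • orbit (stabilizer G q) i = orbit (stabilizer G q) i :=
  smul_orbit (⟨y, hy⟩ : stabilizer G q) i

end Action

section SubsetSums

theorem powerset_map {α β : Type*} (f : α → β) (s : Multiset α) :
    (s.map f).powerset = s.powerset.map (Multiset.map f) := by
  induction s using Multiset.induction_on with
  | empty => simp
  | cons a s ih =>
    simp only [Multiset.map_cons, Multiset.powerset_cons, ih, Multiset.map_add, Multiset.map_map,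
      Function.comp_def]

/-- The sums of the sub-multisets of a multiset of natural numbers, with multiplicity; a multiset
rather than a set, so that membership is decidable by evaluation. -/
def subsetSums (s : Multiset ℕ) : Multiset ℕ :=
  s.powerset.map Multiset.sum

theorem mem_subsetSums {s : Multiset ℕ} {n : ℕ} : n ∈ subsetSums s ↔ ∃ t ≤ s, t.sum = n := by
  simp only [subsetSums, Multiset.mem_map, Multiset.mem_powerset]

theorem mem_subsetSums_add {s t : Multiset ℕ} {n : ℕ} :
    n ∈ subsetSums (s + t) ↔ ∃ k ∈ subsetSums s, ∃ l ∈ subsetSums t, k + l = n := by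
  simp only [mem_subsetSums]
  constructor
  · rintro ⟨u, hu, rfl⟩
    refine ⟨_, ⟨u ∩ s, Multiset.inter_le_right, rfl⟩, _, ⟨u - s, tsub_le_iff_left.2 hu, rfl⟩, ?_⟩
    rw [← Multiset.sum_add, add_comm, Multiset.sub_add_inter]
  · rintro ⟨_, ⟨u, hu, rfl⟩, _, ⟨v, hv, rfl⟩, rfl⟩
    exact ⟨u + v, add_le_add hu hv, Multiset.sum_add u v⟩

theorem mem_subsetSums_replicate_one {m n : ℕ} :
    n ∈ subsetSums (Multiset.replicate m 1) ↔ n ≤ m := by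
  simp [mem_subsetSums, Multiset.le_replicate_iff]

end SubsetSums

variable {α : Type*} [Fintype α] [DecidableEq α]

section CycleType

theorem cycleType_eq_replicate {σ : Perm α} {m : ℕ} (hm : 0 < m)
    (h : ∀ n ∈ σ.cycleType, n = m) : σ.cycleType = Multiset.replicate (#σ.support / m) m := by
  have hrep := Multiset.eq_replicate_card.2 h
  have hsum := sum_cycleType σ
  rw [hrep, Multiset.sum_replicate, smul_eq_mul] at hsum
  rwa [← hsum, Nat.mul_div_cancel _ hm]

theorem cycleType_pow_of_isCycle {σ : Perm α} (hσ : σ.IsCycle) {k : ℕ} (hk : σ ^ k ≠ 1) :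
    (σ ^ k).cycleType =
      Multiset.replicate ((#σ.support).gcd k) (#σ.support / (#σ.support).gcd k) := by
  have horder : orderOf (σ ^ k) = #σ.support / (#σ.support).gcd k := by
    rw [orderOf_pow, hσ.orderOf]
  have hsupport : (σ ^ k).support = σ.support :=
    (hσ.support_pow_eq_iff).2 (mt orderOf_dvd_iff_pow_eq_one.1 hk)
  have hlength : ∀ n ∈ (σ ^ k).cycleType, n = orderOf (σ ^ k) := by
    intro n hn
    obtain ⟨c, τ, hcτ, hdisj, hc, rfl⟩ := mem_cycleType_iff.1 hn
    refine Nat.dvd_antisymm (dvd_of_mem_cycleType hn) (orderOf_dvd_of_pow_eq_one ?_)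
    obtain ⟨x, hx⟩ := hc.nonempty_support
    rw [← pow_mul]
    have hxσ : x ∈ σ.support := by
      rw [← hsupport, hcτ, hdisj.support_mul]; exact mem_union_left _ hx
    rw [hσ.pow_eq_one_iff' (mem_support.1 hxσ), pow_mul, hcτ, hdisj.commute.mul_pow, ← hc.orderOf,
      pow_orderOf_eq_one, one_mul]
    have hτx : τ x = x := (hdisj x).resolve_left (mem_support.1 hx)
    exact pow_apply_eq_self_of_apply_eq_self hτx _
  rw [cycleType_eq_replicate (orderOf_pos _) hlength, horder, hsupport,
    Nat.div_div_self (Nat.gcd_dvd_left _ _) (card_pos.2 hσ.nonempty_support).ne']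

theorem cycleType_pow (σ : Perm α) (k : ℕ) :
    (σ ^ k).cycleType =
      (σ.cycleType.bind fun n => Multiset.replicate (n.gcd k) (n / n.gcd k)).filter (2 ≤ ·) := by
  induction σ using cycle_induction_on with
  | base_one => simp
  | base_cycles σ hσ =>
    rw [hσ.cycleType, Multiset.singleton_bind]
    by_cases hk : σ ^ k = 1
    · have hdvd : #σ.support ∣ k := by rwa [← hσ.orderOf, orderOf_dvd_iff_pow_eq_one]
      have hpos : 0 < #σ.support := two_pos.trans_le hσ.two_le_card_support
      rw [hk, cycleType_one, eq_comm, Multiset.filter_eq_nil, Nat.gcd_eq_left hdvd,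
        Nat.div_self hpos]
      intro n hn
      rw [Multiset.eq_of_mem_replicate hn]
      exact Nat.not_succ_le_self 1
    · rw [← cycleType_pow_of_isCycle hσ hk, eq_comm, Multiset.filter_eq_self]
      exact fun n => two_le_of_mem_cycleType
  | induction_disjoint σ τ hdisj _ hσ hτ =>
    rw [hdisj.commute.mul_pow, (hdisj.pow_disjoint_pow k k).cycleType_mul, hσ, hτ,
      hdisj.cycleType_mul, Multiset.add_bind, Multiset.filter_add]

theorem card_eq_sum_of_parts {σ : Perm α} {s : Multiset ℕ} (hσ : σ.partition.parts = s) :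
    Fintype.card α = s.sum :=
  hσ ▸ σ.partition.parts_sum.symm

theorem cycleType_pow_of_parts {σ : Perm α} {s : Multiset ℕ} (hσ : σ.partition.parts = s) (k : ℕ) :
    (σ ^ k).cycleType = ((s.filter (2 ≤ ·)).bind fun n =>
      Multiset.replicate (n.gcd k) (n / n.gcd k)).filter (2 ≤ ·) := by
  rw [cycleType_pow, ← filter_parts_partition_eq_cycleType, hσ]

theorem cycleType_prod_formPerm {L : List (List α)} (hnodup : L.flatten.Nodup)
    (hlength : ∀ l ∈ L, 2 ≤ l.length) :
    (L.map List.formPerm).prod.cycleType = (L.map List.length : Multiset ℕ) := by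
  obtain ⟨hl, hL⟩ := List.nodup_flatten.1 hnodup
  have hcycle (σ : Perm α) (hσ : σ ∈ L.map List.formPerm) : σ.IsCycle := by
    obtain ⟨l, hlL, rfl⟩ := List.mem_map.1 hσ
    exact List.isCycle_formPerm (hl l hlL) (hlength l hlL)
  have hdisj : (L.map List.formPerm).Pairwise Perm.Disjoint :=
    List.pairwise_map.2 (hL.imp_of_mem fun hx hy hxy =>
      (List.formPerm_disjoint_iff (hl _ hx) (hl _ hy) (hlength _ hx) (hlength _ hy)).2 hxy)
  rw [cycleType_eq _ rfl hcycle hdisj, List.map_map]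
  refine congrArg _ (List.map_congr_left fun l hlL => ?_)
  have hne (x : α) : l ≠ [x] := by
    rintro rfl
    exact absurd (hlength _ hlL) (by simp)
  rw [Function.comp_apply, Function.comp_apply, List.support_formPerm_of_nodup l (hl l hlL) hne,
    List.toFinset_card_of_nodup (hl l hlL)]

theorem parts_partition_prod_formPerm {L : List (List α)} (hnodup : L.flatten.Nodup)
    (hlength : ∀ l ∈ L, 2 ≤ l.length) :
    (L.map List.formPerm).prod.partition.parts =
      (L.map List.length : Multiset ℕ) +
        Multiset.replicate (Fintype.card α - L.flatten.length) 1 := by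
  rw [parts_partition, ← sum_cycleType, cycleType_prod_formPerm hnodup hlength, Multiset.sum_coe,
    List.length_flatten]

theorem mem_alternatingGroup_of_parts {σ : Perm α} {s : Multiset ℕ}
    (hσ : σ.partition.parts = s)
    (hs : (-1 : ℤˣ) ^ ((s.filter (2 ≤ ·)).sum + (s.filter (2 ≤ ·)).card) = 1) :
    σ ∈ alternatingGroup α := by
  rwa [mem_alternatingGroup, sign_of_cycleType, ← filter_parts_partition_eq_cycleType, hσ]

theorem partition_conj (σ x : Perm α) : (x⁻¹ * σ * x).partition = σ.partition :=
  (partition_eq_of_isConj.1 (isConj_iff.2 ⟨x⁻¹, by rw [inv_inv]⟩)).symm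

end CycleType

section InvariantSet

theorem support_subset_of_mem_stabilizer {σ c : Perm α} (hc : c ∈ σ.cycleFactorsFinset)
    {S : Set α} (hS : σ ∈ stabilizer (Perm α) S) {i : α} (hic : i ∈ c.support) (hiS : i ∈ S) :
    (c.support : Set α) ⊆ S := by
  intro j hjc
  obtain ⟨k, rfl⟩ := (isCycleOn_support_of_mem_cycleFactorsFinset hc).2 hic hjc
  exact (mem_stabilizer_set.1 (zpow_mem hS k) i).2 hiS

theorem mem_subsetSums_cycleType {σ : Perm α} {n : ℕ} :
    n ∈ subsetSums σ.cycleType ↔ ∃ U ⊆ σ.cycleFactorsFinset, #(U.biUnion support) = n := by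
  have hcard : ∀ U ⊆ σ.cycleFactorsFinset,
      #(U.biUnion support) = (U.val.map (#·.support)).sum := fun U hU =>
    card_biUnion fun c hc d hd hcd =>
      (cycleFactorsFinset_pairwise_disjoint σ (hU hc) (hU hd) hcd).disjoint_support
  simp only [subsetSums, cycleType_def, powerset_map, Multiset.map_map, Multiset.mem_map,
    Function.comp_apply, Multiset.mem_powerset]
  constructor
  · rintro ⟨s, hs, rfl⟩
    let U : Finset (Perm α) := ⟨s, Multiset.nodup_of_le hs (nodup _)⟩
    exact ⟨U, val_le_iff.1 hs, hcard U (val_le_iff.1 hs)⟩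
  · rintro ⟨U, hU, rfl⟩
    exact ⟨U.val, val_le_iff.2 hU, (hcard U hU).symm⟩

theorem biUnion_support_eq_inter_support {σ : Perm α} {S : Finset α}
    (hS : σ ∈ stabilizer (Perm α) S) :
    {c ∈ σ.cycleFactorsFinset | c.support ⊆ S}.biUnion support = S ∩ σ.support := by
  ext i
  simp only [mem_biUnion, mem_filter, mem_inter]
  constructor
  · rintro ⟨c, ⟨hc, hcS⟩, hi⟩
    exact ⟨hcS hi, mem_cycleFactorsFinset_support_le hc hi⟩
  · rintro ⟨hiS, hi⟩
    have hcycle : σ.cycleOf i ∈ σ.cycleFactorsFinset := cycleOf_mem_cycleFactorsFinset_iff.2 hi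
    have hic : i ∈ (σ.cycleOf i).support := mem_support_cycleOf_iff.2 ⟨SameCycle.rfl, hi⟩
    have hsubset : (σ.cycleOf i).support ⊆ S :=
      support_subset_of_mem_stabilizer hcycle (stabilizer_coe_finset (G := Perm α) S ▸ hS) hic hiS
    exact ⟨_, ⟨hcycle, hsubset⟩, hic⟩

theorem biUnion_support_union_mem_stabilizer {σ : Perm α} {U : Finset (Perm α)}
    (hU : U ⊆ σ.cycleFactorsFinset) {F : Finset α} (hF : F ⊆ σ.supportᶜ) :
    σ ∈ stabilizer (Perm α) (U.biUnion support ∪ F) := by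
  refine mem_stabilizer_finset'.2 fun i hi => ?_
  rcases mem_union.1 hi with hi | hi
  · obtain ⟨c, hc, hic⟩ := mem_biUnion.1 hi
    have hσi : σ i ∈ c.support :=
      (isCycleOn_support_of_mem_cycleFactorsFinset (hU hc)).1.mapsTo hic
    exact mem_union_left _ (mem_biUnion.2 ⟨c, hc, hσi⟩)
  · have hfix : σ i = i := notMem_support.1 (mem_compl.1 (hF hi))
    rw [Perm.smul_def, hfix]
    exact mem_union_right _ hi

theorem mem_subsetSums_parts_partition {σ : Perm α} {n : ℕ} :
    n ∈ subsetSums σ.partition.parts ↔ ∃ S : Finset α, σ ∈ stabilizer (Perm α) S ∧ #S = n := by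
  simp only [parts_partition, mem_subsetSums_add, mem_subsetSums_cycleType,
    mem_subsetSums_replicate_one, ← card_compl]
  constructor
  · rintro ⟨_, ⟨U, hU, rfl⟩, l, hl, rfl⟩
    obtain ⟨F, hF, rfl⟩ := exists_subset_card_eq hl
    have hdisj : _root_.Disjoint (U.biUnion support) F :=
      disjoint_of_subset_left
        (biUnion_subset.2 fun c hc => mem_cycleFactorsFinset_support_le (hU hc))
        (disjoint_of_subset_right hF disjoint_compl_right)
    exact ⟨_, biUnion_support_union_mem_stabilizer hU hF, card_union_of_disjoint hdisj⟩
  · rintro ⟨S, hS, rfl⟩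
    refine ⟨_, ⟨_, filter_subset _ _, congrArg card (biUnion_support_eq_inter_support hS)⟩,
      #(S \ σ.support), card_le_card fun i hi => mem_compl.2 (mem_sdiff.1 hi).2, ?_⟩
    exact card_inter_add_card_sdiff S σ.support

theorem compl_mem_stabilizer {σ : Perm α} {S : Finset α} (hS : σ ∈ stabilizer (Perm α) S) :
    σ ∈ stabilizer (Perm α) Sᶜ := by
  rwa [← stabilizer_coe_finset, coe_compl, stabilizer_compl, stabilizer_coe_finset]

theorem card_mem_subsetSums {σ : Perm α} {S : Finset α} (hS : σ ∈ stabilizer (Perm α) S) :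
    #S ∈ subsetSums σ.partition.parts :=
  mem_subsetSums_parts_partition.2 ⟨S, hS, rfl⟩

theorem card_inter_mem_subsetSums {σ : Perm α} {S T : Finset α}
    (hS : σ ∈ stabilizer (Perm α) S) (hT : σ ∈ stabilizer (Perm α) T) :
    #(S ∩ T) ∈ subsetSums σ.partition.parts ∧
      #S - #(S ∩ T) ∈ subsetSums σ.partition.parts ∧
      #T - #(S ∩ T) ∈ subsetSums σ.partition.parts ∧
      #S + #T - #(S ∩ T) ∈ subsetSums σ.partition.parts := by
  rw [mem_stabilizer_iff] at hS hT
  refine ⟨?_, ?_, ?_, ?_⟩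
  · exact card_mem_subsetSums (by rw [mem_stabilizer_iff, smul_finset_inter, hS, hT])
  · rw [inter_comm, ← card_sdiff]
    exact card_mem_subsetSums (by rw [mem_stabilizer_iff, smul_finset_sdiff, hS, hT])
  · rw [← card_sdiff]
    exact card_mem_subsetSums (by rw [mem_stabilizer_iff, smul_finset_sdiff, hS, hT])
  · rw [← card_union]
    exact card_mem_subsetSums (by rw [mem_stabilizer_iff, smul_finset_union, hS, hT])

end InvariantSet

section PermutationGroup

theorem conj_eq_swap_conj {s t : Perm α} {q : α} (h : s.support ∩ t.support = {q}) :
    s * t * s⁻¹ = swap q (s q) * t * swap q (s q) := by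
  have hdisj : Perm.Disjoint (swap q (s q) * s) t := by
    have honly {i : α} (his : s i ≠ i) (hit : t i ≠ i) : i = q :=
      mem_singleton.1 (h.le (mem_inter.2 ⟨mem_support.2 his, mem_support.2 hit⟩))
    refine fun i => or_iff_not_imp_right.2 fun hit => ?_
    by_cases hiq : i = q
    · rw [hiq, mul_apply, swap_apply_right]
    · have his : s i = i := not_imp_comm.1 (honly · hit) hiq
      rw [mul_apply, his]
      refine swap_apply_of_ne_of_ne hiq ?_
      rintro rfl
      exact hiq (s.injective his)
  have hcomm := hdisj.commute.eq
  calc s * t * s⁻¹ = swap q (s q) * (swap q (s q) * s * t) * s⁻¹ := by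
        simp only [← mul_assoc, swap_mul_self, one_mul]
    _ = swap q (s q) * t * swap q (s q) := by
        rw [hcomm]
        simp only [mul_assoc, mul_inv_cancel, mul_one]

theorem isThreeCycle_commutatorElement {s t : Perm α} {q : α}
    (h : s.support ∩ t.support = {q}) : ⁅s, t⁆.IsThreeCycle := by
  obtain ⟨hs, ht⟩ := mem_inter.1 (h.ge (mem_singleton_self q))
  rw [mem_support] at hs ht
  have hts : t (s q) = s q := by
    by_contra hne
    have hmem : s q ∈ s.support ∩ t.support :=
      mem_inter.2 ⟨apply_mem_support.2 (mem_support.2 hs), mem_support.2 hne⟩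
    exact hs (mem_singleton.1 (h.le hmem))
  have hst : s q ≠ t q := fun heq => hs (t.injective (hts.trans heq))
  have hprod : ⁅s, t⁆ = swap (s q) q * swap (s q) (t q) := by
    calc ⁅s, t⁆ = swap q (s q) * (t * swap q (s q) * t⁻¹) := by
          rw [commutatorElement_def, conj_eq_swap_conj h]
          simp only [mul_assoc]
      _ = swap (s q) q * swap (s q) (t q) := by
          rw [← swap_apply_apply, hts, swap_comm q, swap_comm (t q)]
  rw [hprod]
  exact isThreeCycle_swap_mul_swap_same hs hst ht.symm

theorem exists_apply_eq_self {σ : Perm α} (h : #σ.support < Fintype.card α) : ∃ i, σ i = i := by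
  obtain ⟨i, -, hi⟩ := exists_mem_notMem_of_card_lt_card h
  exact ⟨i, notMem_support.1 hi⟩

variable {G : Subgroup (Perm α)}

theorem le_ncard_orbit_stabilizer [IsPreprimitive G α] {x : G} (hx : x ≠ 1)
    (hfix : #(x : Perm α).support < Fintype.card α) {m : ℕ}
    (hm : ∀ n ∈ (x : Perm α).cycleType, m ≤ n) {q i : α} (hqi : q ≠ i) :
    m ≤ (orbit (stabilizer G q) i).ncard := by
  obtain ⟨p, hp⟩ := exists_apply_eq_self hfix
  obtain ⟨k, hk⟩ : ∃ k, x • k ≠ k := by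
    by_contra! hfixed
    exact hx (Subtype.ext (Perm.ext hfixed))
  obtain ⟨y, hxy, hyq, hyi⟩ : ∃ y, IsConj x y ∧ y • q = q ∧ y • i ≠ i := by
    by_contra! hfixed
    exact hqi (eq_of_forall_isConj_fixed hp hk hfixed)
  let c := (y : Perm α).cycleOf i
  have hi : i ∈ (y : Perm α).support := mem_support.2 hyi
  have hc : c ∈ (y : Perm α).cycleFactorsFinset := cycleOf_mem_cycleFactorsFinset_iff.2 hi
  have hlength : m ≤ #c.support := by
    refine hm _ ?_
    rw [show (x : Perm α).cycleType = (y : Perm α).cycleType from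
      isConj_iff_cycleType_eq.1 (G.subtype.map_isConj hxy), cycleType_def]
    exact Multiset.mem_map_of_mem _ hc
  have hsubset : (c.support : Set α) ⊆ orbit (stabilizer G q) i :=
    support_subset_of_mem_stabilizer hc (smul_orbit_stabilizer hyq i)
      (mem_support_cycleOf_iff.2 ⟨SameCycle.rfl, hi⟩) (mem_orbit_self i)
  calc m ≤ #c.support := hlength
    _ = (c.support : Set α).ncard := (Set.ncard_coe_finset _).symm
    _ ≤ _ := Set.ncard_le_ncard hsubset

theorem is_two_pretransitive_of_mem_cycleType [IsPretransitive G α] {m : ℕ}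
    (horbit : ∀ q i : α, q ≠ i → m ≤ (orbit (stabilizer G q) i).ncard) {y : G}
    (hfix : #(y : Perm α).support < Fintype.card α) {n : ℕ} (hn : n ∈ (y : Perm α).cycleType)
    (hcard : Fintype.card α ≤ n + m) : IsMultiplyPretransitive G α 2 := by
  refine is_two_pretransitive_of_forall_mem_orbit fun q => ?_
  obtain ⟨z, hyz, hzq⟩ : ∃ z, IsConj y z ∧ z • q = q := by
    obtain ⟨p, hp⟩ := exists_apply_eq_self hfix
    obtain ⟨g, rfl⟩ := exists_smul_eq G p q
    refine ⟨g * y * g⁻¹, isConj_iff.2 ⟨g, rfl⟩, ?_⟩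
    rw [mul_smul, mul_smul, inv_smul_smul, smul_left_cancel_iff]
    exact hp
  obtain ⟨c, hc, rfl⟩ : ∃ c ∈ (z : Perm α).cycleFactorsFinset, #c.support = n := by
    rw [show (y : Perm α).cycleType = (z : Perm α).cycleType from
      isConj_iff_cycleType_eq.1 (G.subtype.map_isConj hyz), cycleType_def] at hn
    exact Multiset.mem_map.1 hn
  have hcq : (c.support : Set α) ⊆ {q}ᶜ := by
    rintro i hi rfl
    exact mem_support.1 (mem_cycleFactorsFinset_support_le hc hi) hzq
  have hsubset (i : α) (hqi : q ≠ i) : (c.support : Set α) ⊆ orbit (stabilizer G q) i := by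
    obtain ⟨k, hkc, hki⟩ : ((c.support : Set α) ∩ orbit (stabilizer G q) i).Nonempty := by
      rw [← Set.not_disjoint_iff_nonempty_inter]
      intro hdisj
      have hunion := Set.ncard_le_ncard
        (Set.union_subset hcq (orbit_stabilizer_subset_compl (G := G) hqi))
      rw [Set.ncard_union_eq hdisj, Set.ncard_coe_finset, Set.ncard_compl, Set.ncard_singleton,
        Nat.card_eq_fintype_card] at hunion
      have hle := horbit q i hqi
      have hpos := Fintype.card_pos_iff.2 ⟨q⟩
      omega
    exact support_subset_of_mem_stabilizer hc (smul_orbit_stabilizer hzq i) hkc hki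
  obtain ⟨k, hk⟩ := (mem_cycleFactorsFinset_iff.1 hc).1.nonempty_support
  intro i j hqi hqj
  rw [← orbit_eq_iff.2 (hsubset i hqi hk), orbit_eq_iff.2 (hsubset j hqj hk)]
  exact mem_orbit_self j

theorem alternatingGroup_le_of_small_support (hG : IsMultiplyPretransitive G α 2)
    {t : Perm α} (ht : t ∈ G) (ht1 : t ≠ 1) (hsmall : (#t.support - 1) ^ 2 < Fintype.card α - 1) :
    alternatingGroup α ≤ G := by
  obtain ⟨q, hq⟩ : t.support.Nonempty := nonempty_iff_ne_empty.2 (mt support_eq_empty_iff.1 ht1)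
  obtain ⟨h, hhq, hdisj⟩ : ∃ h : G, h • q = q ∧
      Disjoint ((h : Perm α) • t.support.erase q) (t.support.erase q) := by
    obtain ⟨⟨h, hhq⟩, hdisj⟩ :=
      exists_disjoint_smul (G := stabilizer G q) (t.support.erase q) (t.support.erase q)
        fun i hi => by
          rwa [orbit_stabilizer_eq_compl hG (ne_of_mem_erase hi).symm, Set.ncard_compl,
            Set.ncard_singleton, Nat.card_eq_fintype_card, card_erase_of_mem hq, ← sq]
    exact ⟨h, hhq, hdisj⟩
  let s : Perm α := h * t * (h : Perm α)⁻¹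
  have hsG : s ∈ G := mul_mem (mul_mem h.2 ht) (inv_mem h.2)
  have hsupport : s.support = insert q ((h : Perm α) • t.support.erase q) := by
    calc s.support = t.support.map (h : Perm α).toEmbedding := support_conj
      _ = (h : Perm α) • t.support := map_eq_image _ _
      _ = (h : Perm α) • insert q (t.support.erase q) := by rw [insert_erase hq]
      _ = insert q ((h : Perm α) • t.support.erase q) := by
        rw [smul_finset_insert, show (h : Perm α) • q = q from hhq]
  have hinter : s.support ∩ t.support = {q} := by
    calc s.support ∩ t.support
        = insert q ((h : Perm α) • t.support.erase q) ∩ insert q (t.support.erase q) := by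
          rw [hsupport, insert_erase hq]
      _ = {q} := by
          rw [← insert_inter_distrib, disjoint_iff_inter_eq_empty.1 hdisj, insert_empty_eq]
  exact alternatingGroup_le_of_isPreprimitive_of_isThreeCycle_mem
    (isPreprimitive_of_is_two_pretransitive hG) (isThreeCycle_commutatorElement hinter)
    (mul_mem (mul_mem (mul_mem hsG ht) (inv_mem hsG)) (inv_mem ht))

theorem alternatingGroup_le_of_prime_card [IsPretransitive G α] (hα : (Nat.card α).Prime)
    {x y t : Perm α} (hx : x ∈ G) (hx1 : x ≠ 1) (hxfix : #x.support < Fintype.card α)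
    (hy : y ∈ G) (hyfix : #y.support < Fintype.card α) {m n : ℕ} (hm : ∀ k ∈ x.cycleType, m ≤ k)
    (hn : n ∈ y.cycleType) (hcard : Fintype.card α ≤ n + m) (ht : t ∈ G) (ht1 : t ≠ 1)
    (hsmall : (#t.support - 1) ^ 2 < Fintype.card α - 1) : alternatingGroup α ≤ G := by
  have : IsPreprimitive G α := IsPreprimitive.of_prime_card hα
  have horbit (q i : α) (hqi : q ≠ i) : m ≤ (orbit (stabilizer G q) i).ncard :=
    le_ncard_orbit_stabilizer (x := ⟨x, hx⟩) (by simpa [Subtype.ext_iff] using hx1) hxfix hm hqi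
  exact alternatingGroup_le_of_small_support
    (is_two_pretransitive_of_mem_cycleType horbit (y := ⟨y, hy⟩) hyfix hn hcard) ht ht1 hsmall

theorem exists_le_stabilizer_of_not_isPretransitive (hG : ¬ IsPretransitive G α) :
    ∃ S : Finset α, 0 < #S ∧ #S < Fintype.card α ∧ G ≤ stabilizer (Perm α) S := by
  classical
  obtain ⟨i, j, hij⟩ : ∃ i j : α, j ∉ orbit G i := by
    by_contra! horbit
    exact hG ⟨horbit⟩
  let S : Finset α := {k | k ∈ orbit G i}
  have hS (k : α) : k ∈ S ↔ k ∈ orbit G i := mem_filter_univ k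
  refine ⟨S, card_pos.2 ⟨i, (hS i).2 (mem_orbit_self i)⟩,
    card_lt_univ_of_notMem (mt (hS j).1 hij), fun g hg => mem_stabilizer_finset'.2 fun k hk => ?_⟩
  rw [hS] at hk ⊢
  exact mem_orbit_of_mem_orbit (⟨g, hg⟩ : G) hk

theorem exists_card_eq_le_stabilizer {σ τ : Perm α} (hσ : σ ∈ G) (hτ : τ ∈ G)
    (hG : ¬ IsPretransitive G α) {n : ℕ}
    (hcommon : ∀ k ∈ subsetSums σ.partition.parts, k ∈ subsetSums τ.partition.parts →
      0 < k → k < Fintype.card α → k = n ∨ k + n = Fintype.card α) :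
    ∃ S : Finset α, #S = n ∧ G ≤ stabilizer (Perm α) S := by
  obtain ⟨S, hpos, hlt, hS⟩ := exists_le_stabilizer_of_not_isPretransitive hG
  rcases hcommon _ (card_mem_subsetSums (hS hσ)) (card_mem_subsetSums (hS hτ)) hpos hlt with h | h
  · exact ⟨S, h, hS⟩
  · exact ⟨Sᶜ, by rw [card_compl, ← h, Nat.add_sub_cancel_left],
      fun g hg => compl_mem_stabilizer (hS hg)⟩

end PermutationGroup

section Generation

theorem alternatingGroup_not_le_stabilizer (hα : 3 ≤ Fintype.card α) {S : Finset α} (hpos : 0 < #S)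
    (hlt : #S < Fintype.card α) : ¬ alternatingGroup α ≤ stabilizer (Perm α) S := by
  intro hle
  obtain ⟨i, hi⟩ := card_pos.1 hpos
  obtain ⟨j, -, hj⟩ := exists_mem_notMem_of_card_lt_card (hlt.trans_eq card_univ.symm)
  have := alternatingGroup.isPretransitive_of_three_le_card α
    (Nat.card_eq_fintype_card (α := α) ▸ hα)
  obtain ⟨⟨g, hg⟩, rfl⟩ := exists_smul_eq (alternatingGroup α) i j
  exact hj ((mem_stabilizer_finset.1 (hle hg) i).2 hi)

theorem exists_mem_alternatingGroup_conj_mem_stabilizer (hα : 3 ≤ Fintype.card α) {τ : Perm α}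
    {S : Finset α} (hτ : #S ∈ subsetSums τ.partition.parts) :
    ∃ x ∈ alternatingGroup α, x⁻¹ * τ * x ∈ stabilizer (Perm α) S := by
  obtain ⟨T, hT, hTS⟩ := mem_subsetSums_parts_partition.1 hτ
  have := Set.powersetCard.isPretransitive_alternatingGroup (n := #S)
    (Nat.card_eq_fintype_card (α := α) ▸ hα)
  obtain ⟨⟨x, hx⟩, hxS⟩ := exists_smul_eq (alternatingGroup α)
    (⟨S, rfl⟩ : Set.powersetCard α #S) ⟨T, hTS⟩
  have hxS : x • S = T := congrArg Subtype.val hxS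
  refine ⟨x, hx, ?_⟩
  rw [mem_stabilizer_iff, mul_smul, mul_smul, hxS, mem_stabilizer_iff.1 hT, ← hxS, inv_smul_smul]

theorem not_invGenIn_of_mem_subsetSums (hα : 3 ≤ Fintype.card α) {σ τ : Perm α} {n : ℕ}
    (hpos : 0 < n) (hlt : n < Fintype.card α) (hσ : n ∈ subsetSums σ.partition.parts)
    (hτ : n ∈ subsetSums τ.partition.parts) {A : Set (Perm α)} (hA : A ⊆ {σ, τ}) :
    ¬ InvGenIn (alternatingGroup α) A := by
  intro hgen
  obtain ⟨S, hS, rfl⟩ := mem_subsetSums_parts_partition.1 hσ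
  obtain ⟨x, hx, hxτ⟩ := exists_mem_alternatingGroup_conj_mem_stabilizer hα hτ
  refine alternatingGroup_not_le_stabilizer hα hpos hlt ?_
  rw [← hgen (fun g => if g = σ then 1 else x) fun g => by
    split_ifs; exacts [one_mem _, hx], Subgroup.closure_le]
  rintro _ ⟨g, hg, rfl⟩
  rw [SetLike.mem_coe]
  rcases eq_or_ne g σ with rfl | hne
  · simpa only [if_true, inv_one, one_mul, mul_one] using hS
  · obtain rfl : g = τ := (hA hg).resolve_left hne
    simpa only [if_neg hne] using hxτ

theorem invGenIn_alternatingGroup_of_forall {A : Set (Perm α)} (hA : A ⊆ alternatingGroup α)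
    (hgen : ∀ G : Subgroup (Perm α), (∀ σ ∈ A, ∃ τ ∈ G, IsConj σ τ) → alternatingGroup α ≤ G) :
    InvGenIn (alternatingGroup α) A := by
  intro x hx
  refine le_antisymm ((Subgroup.closure_le _).2 ?_) (hgen _ fun σ hσ => ?_)
  · rintro _ ⟨σ, hσ, rfl⟩
    exact mul_mem (mul_mem (inv_mem (hx σ)) (hA hσ)) (hx σ)
  · exact ⟨_, Subgroup.subset_closure ⟨σ, hσ, rfl⟩, isConj_iff.2 ⟨(x σ)⁻¹, by rw [inv_inv]⟩⟩

end Generation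

section CycleLengths

variable {G : Subgroup (Perm α)} {a b c : Perm α}

theorem alternatingGroup_le_of_mem_b [IsPretransitive G α] (hbG : b ∈ G)
    (hb : b.partition.parts = {2, 2, 25}) : alternatingGroup α ≤ G := by
  have hα : Fintype.card α = 29 := card_eq_sum_of_parts hb
  have hx : (b ^ 2).cycleType = {25} := by
    rw [cycleType_pow_of_parts hb]; decide
  have ht : (b ^ 25).cycleType = {2, 2} := by
    rw [cycleType_pow_of_parts hb]; decide
  have hxfix : #(b ^ 2).support < Fintype.card α := by rw [← sum_cycleType, hx, hα]; decide
  refine alternatingGroup_le_of_prime_card (x := b ^ 2) (y := b ^ 2) (t := b ^ 25) (m := 25)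
    (n := 25) ?_ (pow_mem hbG 2) ?_ hxfix (pow_mem hbG 2) hxfix ?_ ?_ ?_ (pow_mem hbG 25) ?_ ?_
  · rw [Nat.card_eq_fintype_card, hα]; norm_num
  · rw [ne_eq, ← cycleType_eq_zero, hx]; decide
  · rw [hx]; decide
  · rw [hx]; decide
  · rw [hα]; decide
  · rw [ne_eq, ← cycleType_eq_zero, ht]; decide
  · rw [← sum_cycleType, ht, hα]; decide

theorem alternatingGroup_le_of_mem_ac [IsPretransitive G α] (haG : a ∈ G)
    (ha : a.partition.parts = {1, 3, 3, 11, 11}) (hcG : c ∈ G)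
    (hc : c.partition.parts = {2, 6, 21}) : alternatingGroup α ≤ G := by
  have hα : Fintype.card α = 29 := card_eq_sum_of_parts ha
  have hx : (a ^ 3).cycleType = {11, 11} := by
    rw [cycleType_pow_of_parts ha]; decide
  have hy : (c ^ 2).cycleType = {3, 3, 21} := by
    rw [cycleType_pow_of_parts hc]; decide
  have ht : (a ^ 11).cycleType = {3, 3} := by
    rw [cycleType_pow_of_parts ha]; decide
  refine alternatingGroup_le_of_prime_card (x := a ^ 3) (y := c ^ 2) (t := a ^ 11) (m := 11)
    (n := 21) ?_ (pow_mem haG 3) ?_ ?_ (pow_mem hcG 2) ?_ ?_ ?_ ?_ (pow_mem haG 11) ?_ ?_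
  · rw [Nat.card_eq_fintype_card, hα]; norm_num
  · rw [ne_eq, ← cycleType_eq_zero, hx]; decide
  · rw [← sum_cycleType, hx, hα]; decide
  · rw [← sum_cycleType, hy, hα]; decide
  · rw [hx]; decide
  · rw [hy]; decide
  · rw [hα]; decide
  · rw [ne_eq, ← cycleType_eq_zero, ht]; decide
  · rw [← sum_cycleType, ht, hα]; decide

theorem exists_card_eq_four_le_stabilizer (ha : a.partition.parts = {1, 3, 3, 11, 11})
    (hb : b.partition.parts = {2, 2, 25}) (haG : a ∈ G) (hbG : b ∈ G)
    (hG : ¬ alternatingGroup α ≤ G) : ∃ S : Finset α, #S = 4 ∧ G ≤ stabilizer (Perm α) S := by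
  refine exists_card_eq_le_stabilizer haG hbG
    (fun _ => hG (alternatingGroup_le_of_mem_b hbG hb)) ?_
  rw [ha, hb, card_eq_sum_of_parts ha]
  decide

theorem exists_card_eq_six_le_stabilizer (ha : a.partition.parts = {1, 3, 3, 11, 11})
    (hc : c.partition.parts = {2, 6, 21}) (haG : a ∈ G) (hcG : c ∈ G)
    (hG : ¬ alternatingGroup α ≤ G) : ∃ S : Finset α, #S = 6 ∧ G ≤ stabilizer (Perm α) S := by
  refine exists_card_eq_le_stabilizer haG hcG
    (fun _ => hG (alternatingGroup_le_of_mem_ac haG ha hcG hc)) ?_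
  rw [ha, hc, card_eq_sum_of_parts ha]
  decide

theorem exists_card_eq_two_le_stabilizer (hb : b.partition.parts = {2, 2, 25})
    (hc : c.partition.parts = {2, 6, 21}) (hbG : b ∈ G) (hcG : c ∈ G)
    (hG : ¬ alternatingGroup α ≤ G) : ∃ S : Finset α, #S = 2 ∧ G ≤ stabilizer (Perm α) S := by
  refine exists_card_eq_le_stabilizer hbG hcG
    (fun _ => hG (alternatingGroup_le_of_mem_b hbG hb)) ?_
  rw [hb, hc, card_eq_sum_of_parts hb]
  decide

theorem alternatingGroup_le_of_mem_abc (ha : a.partition.parts = {1, 3, 3, 11, 11})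
    (hb : b.partition.parts = {2, 2, 25}) (hc : c.partition.parts = {2, 6, 21})
    (haG : a ∈ G) (hbG : b ∈ G) (hcG : c ∈ G) : alternatingGroup α ≤ G := by
  by_contra hG
  obtain ⟨S, hS4, hS⟩ := exists_card_eq_four_le_stabilizer ha hb haG hbG hG
  have hcS : #S ∈ subsetSums c.partition.parts := card_mem_subsetSums (hS hcG)
  rw [hS4, hc] at hcS
  exact absurd hcS (by decide)

theorem card_inter_eq_three (ha : a.partition.parts = {1, 3, 3, 11, 11}) {S T : Finset α}
    (hS : a ∈ stabilizer (Perm α) S) (hT : a ∈ stabilizer (Perm α) T) (hS4 : #S = 4)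
    (hT6 : #T = 6) : #(S ∩ T) = 3 := by
  have hmem := card_inter_mem_subsetSums hS hT
  rw [ha, hS4, hT6] at hmem
  have hsizes : ∀ k ≤ 4, k ∈ subsetSums {1, 3, 3, 11, 11} ∧
      4 - k ∈ subsetSums {1, 3, 3, 11, 11} ∧ 6 - k ∈ subsetSums {1, 3, 3, 11, 11} ∧
      4 + 6 - k ∈ subsetSums {1, 3, 3, 11, 11} → k = 3 := by decide
  exact hsizes _ (hS4 ▸ card_le_card inter_subset_left) hmem

theorem card_inter_eq_two (hb : b.partition.parts = {2, 2, 25}) {S T : Finset α}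
    (hS : b ∈ stabilizer (Perm α) S) (hT : b ∈ stabilizer (Perm α) T) (hS4 : #S = 4)
    (hT2 : #T = 2) : #(S ∩ T) = 2 := by
  have hmem := card_inter_mem_subsetSums hS hT
  rw [hb, hS4, hT2] at hmem
  have hsizes : ∀ k ≤ 2, k ∈ subsetSums {2, 2, 25} ∧ 4 - k ∈ subsetSums {2, 2, 25} ∧
      2 - k ∈ subsetSums {2, 2, 25} ∧ 4 + 2 - k ∈ subsetSums {2, 2, 25} → k = 2 := by
    decide
  exact hsizes _ (hT2 ▸ card_le_card inter_subset_right) hmem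

theorem card_inter_eq_zero (hc : c.partition.parts = {2, 6, 21}) {S T : Finset α}
    (hS : c ∈ stabilizer (Perm α) S) (hT : c ∈ stabilizer (Perm α) T) (hS6 : #S = 6)
    (hT2 : #T = 2) : #(S ∩ T) = 0 := by
  have hmem := card_inter_mem_subsetSums hS hT
  rw [hc, hS6, hT2] at hmem
  have hsizes : ∀ k ≤ 2, k ∈ subsetSums {2, 6, 21} ∧ 6 - k ∈ subsetSums {2, 6, 21} ∧
      2 - k ∈ subsetSums {2, 6, 21} ∧ 6 + 2 - k ∈ subsetSums {2, 6, 21} → k = 0 := by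
    decide
  exact hsizes _ (hT2 ▸ card_le_card inter_subset_right) hmem

theorem alternatingGroup_le_closure_pair (ha : a.partition.parts = {1, 3, 3, 11, 11})
    (hb : b.partition.parts = {2, 2, 25}) (hc : c.partition.parts = {2, 6, 21}) :
    alternatingGroup α ≤ Subgroup.closure {a, b} ∨ alternatingGroup α ≤ Subgroup.closure {a, c} ∨
      alternatingGroup α ≤ Subgroup.closure {b, c} := by
  have hleft (σ τ : Perm α) : σ ∈ Subgroup.closure {σ, τ} :=
    Subgroup.subset_closure (Set.mem_insert _ _)
  have hright (σ τ : Perm α) : τ ∈ Subgroup.closure {σ, τ} :=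
    Subgroup.subset_closure (Set.mem_insert_of_mem _ rfl)
  by_contra! ⟨hab, hac, hbc⟩
  obtain ⟨S, hS4, hS⟩ := exists_card_eq_four_le_stabilizer ha hb (hleft a b)
    (hright a b) hab
  obtain ⟨T, hT6, hT⟩ := exists_card_eq_six_le_stabilizer ha hc (hleft a c)
    (hright a c) hac
  obtain ⟨U, hU2, hU⟩ := exists_card_eq_two_le_stabilizer hb hc (hleft b c)
    (hright b c) hbc
  have hST : #(S ∩ T) = 3 := card_inter_eq_three ha (hS (hleft a b)) (hT (hleft a c)) hS4 hT6
  have hSU : #(S ∩ U) = 2 := card_inter_eq_two hb (hS (hright a b)) (hU (hleft b c)) hS4 hU2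
  have hTU : #(T ∩ U) = 0 := card_inter_eq_zero hc (hT (hright a c)) (hU (hright b c)) hT6 hU2
  have hdisj : _root_.Disjoint (S ∩ T) (S ∩ U) :=
    (disjoint_iff_inter_eq_empty.2 (card_eq_zero.1 hTU)).mono inter_subset_right inter_subset_right
  have hle : #(S ∩ T ∪ S ∩ U) ≤ #S :=
    card_le_card (union_subset inter_subset_left inter_subset_left)
  rw [card_union_of_disjoint hdisj, hST, hSU, hS4] at hle
  exact absurd hle (by decide)

theorem invGenIn_alternatingGroup (ha : a.partition.parts = {1, 3, 3, 11, 11})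
    (hb : b.partition.parts = {2, 2, 25}) (hc : c.partition.parts = {2, 6, 21}) :
    InvGenIn (alternatingGroup α) {a, b, c} := by
  refine invGenIn_alternatingGroup_of_forall ?_ fun G hG => ?_
  · rintro _ (rfl | rfl | rfl)
    exacts [mem_alternatingGroup_of_parts ha (by decide),
      mem_alternatingGroup_of_parts hb (by decide), mem_alternatingGroup_of_parts hc (by decide)]
  · obtain ⟨a', ha', haa'⟩ := hG a (.inl rfl)
    obtain ⟨b', hb', hbb'⟩ := hG b (.inr (.inl rfl))
    obtain ⟨c', hc', hcc'⟩ := hG c (.inr (.inr rfl))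
    rw [partition_eq_of_isConj.1 haa'] at ha
    rw [partition_eq_of_isConj.1 hbb'] at hb
    rw [partition_eq_of_isConj.1 hcc'] at hc
    exact alternatingGroup_le_of_mem_abc ha hb hc ha' hb' hc'

theorem not_invGenIn_of_ssubset (ha : a.partition.parts = {1, 3, 3, 11, 11})
    (hb : b.partition.parts = {2, 2, 25}) (hc : c.partition.parts = {2, 6, 21})
    {A : Set (Perm α)} (hA : A ⊂ {a, b, c}) : ¬ InvGenIn (alternatingGroup α) A := by
  have hα : Fintype.card α = 29 := card_eq_sum_of_parts ha
  have hpair {σ τ : Perm α} {n : ℕ} (hpos : 0 < n) (hlt : n < 29)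
      (hσ : n ∈ subsetSums σ.partition.parts) (hτ : n ∈ subsetSums τ.partition.parts)
      (hA : A ⊆ {σ, τ}) : ¬ InvGenIn (alternatingGroup α) A :=
    not_invGenIn_of_mem_subsetSums (by rw [hα]; decide) hpos (by rwa [hα]) hσ hτ hA
  obtain ⟨g, rfl | rfl | rfl, hg⟩ := Set.exists_of_ssubset hA
  · have hA : A ⊆ {b, c} := (Set.subset_insert_iff_of_notMem hg).1 hA.subset
    exact hpair (n := 2) (by decide) (by decide) (by rw [hb]; decide) (by rw [hc]; decide) hA
  · rw [Set.insert_comm] at hA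
    have hA : A ⊆ {a, c} := (Set.subset_insert_iff_of_notMem hg).1 hA.subset
    exact hpair (n := 6) (by decide) (by decide) (by rw [ha]; decide) (by rw [hc]; decide) hA
  · rw [Set.pair_comm, Set.insert_comm] at hA
    have hA : A ⊆ {a, b} := (Set.subset_insert_iff_of_notMem hg).1 hA.subset
    exact hpair (n := 4) (by decide) (by decide) (by rw [ha]; decide) (by rw [hb]; decide) hA

theorem not_minGenIn_alternatingGroup (ha : a.partition.parts = {1, 3, 3, 11, 11})
    (hb : b.partition.parts = {2, 2, 25}) (hc : c.partition.parts = {2, 6, 21}) :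
    ¬ MinGenIn (alternatingGroup α) {a, b, c} := by
  rintro ⟨hgen, hmin⟩
  have hsubset {A : Set (Perm α)} (hA : A ⊂ {a, b, c}) :
      ¬ alternatingGroup α ≤ Subgroup.closure A := fun hle =>
    hmin A hA (((Subgroup.closure_mono hA.subset).trans_eq hgen).antisymm hle)
  have hab : a ≠ b := by rintro rfl; exact absurd (ha.symm.trans hb) (by decide)
  have hac : a ≠ c := by rintro rfl; exact absurd (ha.symm.trans hc) (by decide)
  have hbc : b ≠ c := by rintro rfl; exact absurd (hb.symm.trans hc) (by decide)
  rcases alternatingGroup_le_closure_pair ha hb hc with h | h | h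
  · refine hsubset ?_ h
    rw [Set.pair_comm b c, Set.insert_comm]
    exact Set.ssubset_insert (by simp [hac.symm, hbc.symm])
  · refine hsubset ?_ h
    rw [Set.insert_comm]
    exact Set.ssubset_insert (by simp [hab.symm, hbc])
  · exact hsubset (Set.ssubset_insert (by simp [hab, hac])) h

end CycleLengths

theorem parts_partition_a {a : Perm (Fin 29)} (ha : a = c[2, 3, 4] * c[5, 6, 7] *
      c[8, 9, 10, 11, 12, 13, 14, 15, 16, 17, 18] *
      c[19, 20, 21, 22, 23, 24, 25, 26, 27, 28, 29]) :
    a.partition.parts = {1, 3, 3, 11, 11} := by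
  let L : List (List (Fin 29)) := [[2, 3, 4], [5, 6, 7],
    [8, 9, 10, 11, 12, 13, 14, 15, 16, 17, 18],
    [19, 20, 21, 22, 23, 24, 25, 26, 27, 28, 29]]
  have hL : a = (L.map List.formPerm).prod := by
    rw [ha]
    simp only [L, List.map_cons, List.map_nil, List.prod_cons, List.prod_nil, mul_one, mul_assoc]
    rfl
  rw [hL, parts_partition_prod_formPerm (by decide) (by decide)]
  decide

theorem parts_partition_b {b : Perm (Fin 29)} (hb : b = c[1, 2] * c[3, 4] *
      c[5, 6, 7, 8, 9, 10, 11, 12, 13, 14, 15, 16, 17, 18, 19, 20, 21, 22, 23,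
        24, 25, 26, 27, 28, 29]) :
    b.partition.parts = {2, 2, 25} := by
  let L : List (List (Fin 29)) := [[1, 2], [3, 4],
    [5, 6, 7, 8, 9, 10, 11, 12, 13, 14, 15, 16, 17, 18, 19, 20, 21, 22, 23,
      24, 25, 26, 27, 28, 29]]
  have hL : b = (L.map List.formPerm).prod := by
    rw [hb]
    simp only [L, List.map_cons, List.map_nil, List.prod_cons, List.prod_nil, mul_one, mul_assoc]
    rfl
  rw [hL, parts_partition_prod_formPerm (by decide) (by decide)]
  decide

theorem parts_partition_c {c : Perm (Fin 29)} (hc : c = c[1, 2] * c[3, 4, 5, 6, 7, 8] *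
      c[9, 10, 11, 12, 13, 14, 15, 16, 17, 18, 19, 20, 21, 22, 23, 24, 25, 26,
        27, 28, 29]) :
    c.partition.parts = {2, 6, 21} := by
  let L : List (List (Fin 29)) := [[1, 2], [3, 4, 5, 6, 7, 8],
    [9, 10, 11, 12, 13, 14, 15, 16, 17, 18, 19, 20, 21, 22, 23, 24, 25, 26,
      27, 28, 29]]
  have hL : c = (L.map List.formPerm).prod := by
    rw [hc]
    simp only [L, List.map_cons, List.map_nil, List.prod_cons, List.prod_nil, mul_one, mul_assoc]
    rfl
  rw [hL, parts_partition_prod_formPerm (by decide) (by decide)]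
  decide

end InvariableGeneration

open InvariableGeneration in
theorem stmt6_general {α : Type*} [Fintype α] [DecidableEq α] {a b c : Equiv.Perm α}
    (ha : a.partition.parts = {1, 3, 3, 11, 11}) (hb : b.partition.parts = {2, 2, 25})
    (hc : c.partition.parts = {2, 6, 21}) :
    MinInvGenIn (alternatingGroup α) {a, b, c} ∧
      ∀ x y z : Equiv.Perm α,
        ¬ MinGenIn (alternatingGroup α) {x⁻¹ * a * x, y⁻¹ * b * y, z⁻¹ * c * z} :=
  ⟨⟨invGenIn_alternatingGroup ha hb hc, fun _ => not_invGenIn_of_ssubset ha hb hc⟩,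
    fun x y z => not_minGenIn_alternatingGroup (by rwa [partition_conj])
      (by rwa [partition_conj]) (by rwa [partition_conj])⟩

open Equiv in
/-- In `G = Alt(29)` (even permutations of a 29-element set, here
`Fin 29` with the point "29" of the paper rendered as `(29 : Fin 29) = 0`), the
displayed elements `a`, `b`, `c` form a minimal invariable generating set of `G`,
yet no choice of conjugates `x⁻¹ax, y⁻¹by, z⁻¹cz` (with `x, y, z ∈ G`) is a
minimal generating set of `G`. -/
theorem stmt6 (a b c : Equiv.Perm (Fin 29))
    (ha : a = c[2, 3, 4] * c[5, 6, 7] *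
      c[8, 9, 10, 11, 12, 13, 14, 15, 16, 17, 18] *
      c[19, 20, 21, 22, 23, 24, 25, 26, 27, 28, 29])
    (hb : b = c[1, 2] * c[3, 4] *
      c[5, 6, 7, 8, 9, 10, 11, 12, 13, 14, 15, 16, 17, 18, 19, 20, 21, 22, 23,
        24, 25, 26, 27, 28, 29])
    (hc : c = c[1, 2] * c[3, 4, 5, 6, 7, 8] *
      c[9, 10, 11, 12, 13, 14, 15, 16, 17, 18, 19, 20, 21, 22, 23, 24, 25, 26,
        27, 28, 29]) :
    MinInvGenIn (alternatingGroup (Fin 29)) {a, b, c} ∧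
      ∀ x y z : Equiv.Perm (Fin 29),
        x ∈ alternatingGroup (Fin 29) → y ∈ alternatingGroup (Fin 29) →
        z ∈ alternatingGroup (Fin 29) →
        ¬ MinGenIn (alternatingGroup (Fin 29))
            {x⁻¹ * a * x, y⁻¹ * b * y, z⁻¹ * c * z} := by
  obtain ⟨hinv, hmin⟩ :=
    stmt6_general (InvariableGeneration.parts_partition_a ha)
      (InvariableGeneration.parts_partition_b hb) (InvariableGeneration.parts_partition_c hc)
  exact ⟨hinv, fun x y z _ _ _ => hmin x y z⟩
end

section
/- For every pair of finite groups A and B, m_I(A) + m_I(B) ≤ m_I(A × B). -/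
/-!
A set `S` invariably generates `G` exactly when no proper subgroup `H` has a conjugate through every
element of `S`, that is, when `S ⊆ conjUnion H` forces `H = ⊤`. The identity lies in `conjUnion H`
for every `H`, so it never contributes to invariable generation.

In `A × B` the conjugates of `(a, 1)` are the `(a', 1)` with `a'` conjugate to `a`. Hence
`S × {1} ∪ {1} × T` invariably generates `A × B` if and only if `S` and `T` invariably generate `A`
and `B`. If `S` and `T` are minimal then so is this union, as discarding an element of it amounts to
discarding an element of `S` or of `T`; the two parts are disjoint because neither `S` nor `T`
contains the identity.

Minimal invariable generating sets exist by Jordan's theorem that a finite group is never the union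
of the conjugates of a proper subgroup.
-/

section ConjUnion

variable {G : Type*} [Group G]

lemma mem_conjUnion {H : Subgroup G} {x : G} : x ∈ conjUnion H ↔ ∃ g, g⁻¹ * x * g ∈ H := by
  simp only [conjUnion, Set.mem_iUnion, Set.mem_image, SetLike.mem_coe]
  constructor
  · rintro ⟨g, m, hm, rfl⟩
    exact ⟨g⁻¹, by simpa [mul_assoc] using hm⟩
  · rintro ⟨g, hg⟩
    exact ⟨g⁻¹, _, hg, by group⟩

lemma one_mem_conjUnion (H : Subgroup G) : 1 ∈ conjUnion H :=
  mem_conjUnion.2 ⟨1, by simp [one_mem]⟩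

lemma mem_conjUnion_iff_fixedBy_nonempty {H : Subgroup G} {x : G} :
    x ∈ conjUnion H ↔ (MulAction.fixedBy (G ⧸ H) x).Nonempty := by
  rw [mem_conjUnion, Set.Nonempty, QuotientGroup.mk_surjective.exists]
  refine exists_congr fun g => ?_
  rw [MulAction.mem_fixedBy, MulAction.Quotient.smul_coe, eq_comm, QuotientGroup.eq, smul_eq_mul,
    mul_assoc]

lemma subsingleton_of_forall_fixedBy_nonempty {X : Type*} [Finite G] [MulAction G X]
    [MulAction.IsPretransitive G X] (h : ∀ g : G, (MulAction.fixedBy X g).Nonempty) :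
    Subsingleton X := by
  classical
  cases nonempty_fintype G
  obtain ⟨x, -⟩ := h 1
  have : Nonempty X := ⟨x⟩
  have : Finite X := .of_surjective _ (MulAction.surjective_smul G x)
  cases nonempty_fintype X
  have one_le_card (g : G) : 1 ≤ Fintype.card (MulAction.fixedBy X g) :=
    Fintype.card_pos_iff.2 (h g).to_subtype
  have card_orbits : Fintype.card (MulAction.orbitRel.Quotient G X) = 1 :=
    Fintype.card_eq_one_iff_nonempty_unique.2
      ((MulAction.pretransitive_iff_unique_quotient_of_nonempty G X).1 inferInstance)
  have burnside : ∑ g : G, Fintype.card (MulAction.fixedBy X g) = Fintype.card G := by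
    rw [MulAction.sum_card_fixedBy_eq_card_orbits_mul_card_group, card_orbits, one_mul]
  -- The fixed-point counts are at least `1` and have average `1`, so the count at the identity,
  -- which is the cardinality of `X`, is `1`.
  have card_fixedBy_one : 1 = Fintype.card (MulAction.fixedBy X (1 : G)) :=
    (Finset.sum_eq_sum_iff_of_le fun g _ => one_le_card g).1
      (by rw [burnside, Finset.sum_const, Finset.card_univ, smul_eq_mul, mul_one])
      1 (Finset.mem_univ 1)
  rw [← Nat.card_eq_fintype_card, MulAction.fixedBy_one_eq_univ, Nat.card_univ] at card_fixedBy_one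
  exact (Nat.card_eq_one_iff_unique.1 card_fixedBy_one.symm).1

theorem eq_top_of_conjUnion_eq_univ [Finite G] {H : Subgroup G} (h : conjUnion H = Set.univ) :
    H = ⊤ := by
  refine QuotientGroup.subgroup_eq_top_of_subsingleton H ?_
  exact subsingleton_of_forall_fixedBy_nonempty fun g =>
    mem_conjUnion_iff_fixedBy_nonempty.1 (h ▸ Set.mem_univ g)

end ConjUnion

section InvGen

variable {G K : Type*} [Group G] [Group K] {S T : Set G}

theorem invGen_iff_forall_subset_conjUnion :
    InvGen S ↔ ∀ H : Subgroup G, S ⊆ conjUnion H → H = ⊤ := by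
  constructor
  · intro h H hSH
    choose! σ hσ using fun s (hs : s ∈ S) => mem_conjUnion.1 (hSH hs)
    rw [eq_top_iff, ← h σ, Subgroup.closure_le]
    exact Set.image_subset_iff.2 hσ
  · exact fun h σ => h _ fun s hs =>
      mem_conjUnion.2 ⟨σ s, Subgroup.subset_closure (Set.mem_image_of_mem _ hs)⟩

lemma InvGen.mono (h : InvGen S) (hST : S ⊆ T) : InvGen T :=
  invGen_iff_forall_subset_conjUnion.2 fun H hT =>
    invGen_iff_forall_subset_conjUnion.1 h H (hST.trans hT)

lemma invGen_insert_one : InvGen (insert 1 S) ↔ InvGen S := by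
  simp only [invGen_iff_forall_subset_conjUnion, Set.insert_subset_iff, one_mem_conjUnion,
    true_and]

lemma invGen_univ [Finite G] : InvGen (Set.univ : Set G) :=
  invGen_iff_forall_subset_conjUnion.2 fun _ h =>
    eq_top_of_conjUnion_eq_univ (Set.univ_subset_iff.1 h)

-- Surjections satisfy `hf`, and so do the inclusions of the factors of a direct product.
lemma InvGen.comap_eq_top (hS : InvGen S) {f : G →* K}
    (hf : ∀ x k, ∃ g, f (g⁻¹ * x * g) = k⁻¹ * f x * k) {H : Subgroup K}
    (hSH : f '' S ⊆ conjUnion H) : H.comap f = ⊤ := by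
  refine invGen_iff_forall_subset_conjUnion.1 hS _ fun s hs => ?_
  obtain ⟨k, hk⟩ := mem_conjUnion.1 (hSH (Set.mem_image_of_mem f hs))
  obtain ⟨g, hg⟩ := hf s k
  exact mem_conjUnion.2 ⟨g, Subgroup.mem_comap.2 (hg ▸ hk)⟩

lemma InvGen.image (hS : InvGen S) {f : G →* K} (hf : Function.Surjective f) :
    InvGen (f '' S) := by
  refine invGen_iff_forall_subset_conjUnion.2 fun H hSH => ?_
  refine Subgroup.comap_injective hf (hS.comap_eq_top (fun x k => ?_) hSH)
  obtain ⟨g, rfl⟩ := hf k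
  exact ⟨g, by simp only [map_mul, map_inv]⟩

end InvGen

section MinInvGen

variable {G : Type*} [Group G] {S : Set G}

lemma minInvGen_iff_minimal : MinInvGen S ↔ Minimal InvGen S :=
  Set.minimal_iff_forall_ssubset.symm

lemma minInvGen_iff_forall_sdiff_singleton :
    MinInvGen S ↔ InvGen S ∧ ∀ s ∈ S, ¬ InvGen (S \ {s}) :=
  minInvGen_iff_minimal.trans (Set.minimal_iff_forall_sdiff_singleton fun _ _ => InvGen.mono)

lemma MinInvGen.one_notMem (hS : MinInvGen S) : 1 ∉ S := by
  obtain ⟨hgen, hmin⟩ := minInvGen_iff_forall_sdiff_singleton.1 hS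
  refine fun h1 => hmin 1 h1 (invGen_insert_one.1 ?_)
  rwa [Set.insert_sdiff_singleton, Set.insert_eq_of_mem h1]

lemma exists_minInvGen (G : Type*) [Group G] [Finite G] : ∃ S : Set G, MinInvGen S := by
  simpa only [minInvGen_iff_minimal] using exists_minimal_of_wellFoundedLT _ ⟨_, invGen_univ⟩

end MinInvGen

section NcardProd

open MonoidHom (inl inr)

variable {A B : Type*} [MulOneClass A] [MulOneClass B] {S : Set A} {T : Set B}

lemma monoidHom_inl_injective : Function.Injective (inl A B) := Prod.mk_left_injective 1

lemma monoidHom_inr_injective : Function.Injective (inr A B) := Prod.mk_right_injective 1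

lemma ncard_image_inl_union_image_inr (hS : S.Finite) (hT : T.Finite) (h1 : 1 ∉ S) :
    (inl A B '' S ∪ inr A B '' T).ncard = S.ncard + T.ncard := by
  have hdisj : Disjoint (inl A B '' S) (inr A B '' T) := by
    rw [Set.disjoint_left]
    rintro _ ⟨a, ha, rfl⟩ ⟨b, -, hb⟩
    have h : 1 = a := congrArg Prod.fst hb
    exact h1 (h ▸ ha)
  rw [Set.ncard_union_eq hdisj (hS.image _) (hT.image _),
    Set.ncard_image_of_injective _ monoidHom_inl_injective,
    Set.ncard_image_of_injective _ monoidHom_inr_injective]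

end NcardProd

section Prod

open MonoidHom (inl inr)

variable {A B : Type*} [Group A] [Group B] {S : Set A} {T : Set B}

lemma eq_top_of_comap_inl_of_comap_inr {H : Subgroup (A × B)} (hA : H.comap (inl A B) = ⊤)
    (hB : H.comap (inr A B) = ⊤) : H = ⊤ := by
  rw [← top_le_iff, ← Subgroup.top_prod_top, Subgroup.prod_le_iff, Subgroup.map_le_iff_le_comap,
    Subgroup.map_le_iff_le_comap, hA, hB]
  exact ⟨le_rfl, le_rfl⟩

lemma InvGen.image_inl_union_image_inr (hS : InvGen S) (hT : InvGen T) :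
    InvGen (inl A B '' S ∪ inr A B '' T) := by
  refine invGen_iff_forall_subset_conjUnion.2 fun H h => ?_
  rw [Set.union_subset_iff] at h
  exact eq_top_of_comap_inl_of_comap_inr
    (hS.comap_eq_top (fun _ k => ⟨k.1, by ext <;> simp⟩) h.1)
    (hT.comap_eq_top (fun _ k => ⟨k.2, by ext <;> simp⟩) h.2)

theorem invGen_image_inl_union_image_inr :
    InvGen (inl A B '' S ∪ inr A B '' T) ↔ InvGen S ∧ InvGen T := by
  refine ⟨fun h => ⟨?_, ?_⟩, fun h => h.1.image_inl_union_image_inr h.2⟩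
  · refine invGen_insert_one.1 ((h.image (f := .fst A B) Prod.fst_surjective).mono ?_)
    rintro _ ⟨_, ⟨a, ha, rfl⟩ | ⟨b, -, rfl⟩, rfl⟩
    exacts [.inr ha, .inl rfl]
  · refine invGen_insert_one.1 ((h.image (f := .snd A B) Prod.snd_surjective).mono ?_)
    rintro _ ⟨_, ⟨a, -, rfl⟩ | ⟨b, hb, rfl⟩, rfl⟩
    exacts [.inl rfl, .inr hb]

theorem MinInvGen.image_inl_union_image_inr (hS : MinInvGen S) (hT : MinInvGen T) :
    MinInvGen (inl A B '' S ∪ inr A B '' T) := by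
  rw [minInvGen_iff_forall_sdiff_singleton] at hS hT ⊢
  refine ⟨hS.1.image_inl_union_image_inr hT.1, ?_⟩
  rintro _ (⟨a, ha, rfl⟩ | ⟨b, hb, rfl⟩) h
  · have hsub : (inl A B '' S ∪ inr A B '' T) \ {inl A B a} ⊆
        inl A B '' (S \ {a}) ∪ inr A B '' T := by
      rw [Set.image_sdiff monoidHom_inl_injective, Set.image_singleton, Set.union_sdiff_distrib]
      exact Set.union_subset_union_right _ Set.sdiff_subset
    exact hS.2 a ha (invGen_image_inl_union_image_inr.1 (h.mono hsub)).1
  · have hsub : (inl A B '' S ∪ inr A B '' T) \ {inr A B b} ⊆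
        inl A B '' S ∪ inr A B '' (T \ {b}) := by
      rw [Set.image_sdiff monoidHom_inr_injective, Set.image_singleton, Set.union_sdiff_distrib]
      exact Set.union_subset_union_left _ Set.sdiff_subset
    exact hT.2 b hb (invGen_image_inl_union_image_inr.1 (h.mono hsub)).2

end Prod

section mInv

variable {G : Type*} [Group G] [Finite G]

lemma bddAbove_ncard_minInvGen : BddAbove {n : ℕ | ∃ S : Set G, MinInvGen S ∧ S.ncard = n} := by
  refine ⟨Nat.card G, ?_⟩
  rintro _ ⟨S, -, rfl⟩
  exact Set.ncard_le_card S

lemma MinInvGen.ncard_le_mInv {S : Set G} (hS : MinInvGen S) : S.ncard ≤ mInv G :=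
  le_csSup bddAbove_ncard_minInvGen ⟨S, hS, rfl⟩

lemma exists_minInvGen_ncard_eq_mInv (G : Type*) [Group G] [Finite G] :
    ∃ S : Set G, MinInvGen S ∧ S.ncard = mInv G := by
  obtain ⟨S, hS⟩ := exists_minInvGen G
  exact Nat.sSup_mem (s := {n | ∃ S : Set G, MinInvGen S ∧ S.ncard = n}) ⟨_, S, hS, rfl⟩
    bddAbove_ncard_minInvGen

end mInv

/-- For finite groups `A` and `B`, `m_I(A) + m_I(B) ≤ m_I(A × B)`. -/
theorem stmt8 (A B : Type*) [Group A] [Finite A] [Group B] [Finite B] :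
    mInv A + mInv B ≤ mInv (A × B) := by
  obtain ⟨S, hS, hS_card⟩ := exists_minInvGen_ncard_eq_mInv A
  obtain ⟨T, hT, hT_card⟩ := exists_minInvGen_ncard_eq_mInv B
  rw [← hS_card, ← hT_card,
    ← ncard_image_inl_union_image_inr S.toFinite T.toFinite hS.one_notMem]
  exact (hS.image_inl_union_image_inr hT).ncard_le_mInv
end

section
/- For every finite group G, m_I(G) ≤ ι(G). -/
/-- `M*`: the set of conjugacy classes of `G` meeting the subgroup `M`. -/
def starSet {G : Type*} [Group G] (M : Subgroup G) : Set (ConjClasses G) :=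
  {c | ∃ x ∈ M, ConjClasses.mk x = c}

/-- `ℳ(G) = {M* : M a maximal subgroup of G}`. -/
def maxStarFamily (G : Type*) [Group G] : Set (Set (ConjClasses G)) :=
  {X | ∃ M : Subgroup G, IsCoatom M ∧ X = starSet M}

/-- A family `S` of members of `ℳ(G)` is independent if for every `X ∈ S`, the
intersection of the members of `S \ {X}` properly contains the intersection of all
the members of `S`. -/
def IndepFamily {G : Type*} [Group G] (S : Set (Set (ConjClasses G))) : Prop :=
  ∀ X ∈ S, ⋂₀ S ⊂ ⋂₀ (S \ {X})

/-- `ι(G)`: the largest cardinality of an independent subset of `ℳ(G)`. -/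
noncomputable def iotaInv (G : Type*) [Group G] : ℕ :=
  sSup {n : ℕ | ∃ S : Set (Set (ConjClasses G)),
    S ⊆ maxStarFamily G ∧ IndepFamily S ∧ S.ncard = n}

/-!
Let `S` be a minimal invariable generating set and `s ∈ S`. Suitable conjugates of the elements of
`S \ {s}` generate a proper subgroup `H`, while `H` and a conjugate of `s` generate `G`; so `G` is
finitely generated over `H`, and Zorn's lemma puts `H` inside a maximal subgroup `M s`. Thus
`(M s)*` contains the classes of all elements of `S \ {s}`, and it misses the class of `s`, because
a proper subgroup cannot meet the classes of all elements of the invariably generating set `S`.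
Hence the class of `s` lies in every `(M t)*` with `t ≠ s` but not in `(M s)*`, so the sets `(M s)*`
are distinct and independent.
-/

section Coatoms

theorem exists_isCoatom_ge_of_sup_eq_top {α : Type*} [CompleteLattice α] {a k : α}
    (hk : IsCompactElement k) (ha : a ≠ ⊤) (hak : a ⊔ k = ⊤) : ∃ m, IsCoatom m ∧ a ≤ m := by
  have eq_top {b : α} (hab : a ≤ b) (hkb : k ≤ b) : b = ⊤ := top_unique (hak ▸ sup_le hab hkb)
  have hka : ¬k ≤ a := fun h => ha (eq_top le_rfl h)
  have chain_bdd : ∀ c ⊆ {b | ¬k ≤ b}, IsChain (· ≤ ·) c → ∀ y ∈ c,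
      ∃ ub ∈ {b | ¬k ≤ b}, ∀ z ∈ c, z ≤ ub := by
    intro c hc hchain y hy
    refine ⟨sSup c, fun hkc => ?_, fun _ => le_sSup⟩
    obtain ⟨z, hz, hkz⟩ := hk c (sSup c) ⟨y, hy⟩ hchain.directedOn (isLUB_sSup c) hkc
    exact hc hz hkz
  obtain ⟨m, ham, hm⟩ := zorn_le_nonempty₀ {b | ¬k ≤ b} chain_bdd a hka
  refine ⟨m, ⟨fun h => hm.prop (h ▸ le_top), fun b hmb => ?_⟩, ham⟩
  exact eq_top (ham.trans hmb.le) (not_not.1 fun hkb => hm.not_prop_of_gt hmb hkb)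

theorem isCompactElement_zpowers {G : Type*} [Group G] (x : G) :
    IsCompactElement (Subgroup.zpowers x) := by
  rw [CompleteLattice.isCompactElement_iff_le_of_directed_sSup_le]
  intro K hne hdir hx
  simpa only [Subgroup.zpowers_le, Subgroup.mem_sSup_of_directedOn hne hdir] using hx

end Coatoms

section Independence

theorem injOn_of_mem_iff_ne {ι α : Type*} {I : Set ι} {f : ι → Set α} {c : ι → α}
    (h : ∀ i ∈ I, ∀ j ∈ I, c i ∈ f j ↔ i ≠ j) : Set.InjOn f I := by
  intro i hi j hj hij
  by_contra hne
  exact (h i hi i hi).1 (hij ▸ (h i hi j hj).2 hne) rfl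

theorem indepFamily_image_of_mem_iff_ne {G ι : Type*} [Group G] {I : Set ι}
    {f : ι → Set (ConjClasses G)} {c : ι → ConjClasses G}
    (h : ∀ i ∈ I, ∀ j ∈ I, c i ∈ f j ↔ i ≠ j) : IndepFamily (f '' I) := by
  rintro _ ⟨i, hi, rfl⟩
  have mem_others : c i ∈ ⋂₀ (f '' I \ {f i}) := by
    rintro _ ⟨⟨j, hj, rfl⟩, hji⟩
    exact (h i hi j hj).2 fun hij => hji (hij ▸ rfl)
  have notMem_all : c i ∉ ⋂₀ (f '' I) := fun hc =>
    (h i hi i hi).1 (hc (f i) (Set.mem_image_of_mem f hi)) rfl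
  exact ⟨Set.sInter_subset_sInter Set.sdiff_subset, fun hsub => notMem_all (hsub mem_others)⟩

theorem bddAbove_ncard_indepFamily {G : Type*} [Group G] (hfin : (maxStarFamily G).Finite) :
    BddAbove {n : ℕ | ∃ F : Set (Set (ConjClasses G)),
      F ⊆ maxStarFamily G ∧ IndepFamily F ∧ F.ncard = n} := by
  refine ⟨(maxStarFamily G).ncard, ?_⟩
  rintro _ ⟨F, hF, -, rfl⟩
  exact Set.ncard_le_ncard hF hfin

end Independence

section InvariableGeneration

variable {G : Type*} [Group G] {S : Set G}

theorem mk_mem_starSet_iff {M : Subgroup G} {x : G} :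
    ConjClasses.mk x ∈ starSet M ↔ ∃ g : G, g⁻¹ * x * g ∈ M := by
  constructor
  · rintro ⟨y, hy, hyx⟩
    obtain ⟨g, rfl⟩ := isConj_iff.1 (ConjClasses.mk_eq_mk_iff_isConj.1 hyx)
    exact ⟨g, by simpa [mul_assoc] using hy⟩
  · rintro ⟨g, hg⟩
    exact ⟨_, hg, ConjClasses.mk_eq_mk_iff_isConj.2 (isConj_iff.2 ⟨g, by group⟩)⟩

theorem InvGen.exists_mk_notMem_starSet (hS : InvGen S) {M : Subgroup G} (hM : M ≠ ⊤) :
    ∃ s ∈ S, ConjClasses.mk s ∉ starSet M := by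
  by_contra! hmem
  choose! σ hσ using fun s hs => mk_mem_starSet_iff.1 (hmem s hs)
  refine hM (top_unique ?_)
  rw [← hS σ, Subgroup.closure_le]
  exact Set.image_subset_iff.2 hσ

theorem InvGen.exists_isCoatom_of_not_invGen_sdiff_singleton (hS : InvGen S) {s : G}
    (hs : ¬InvGen (S \ {s})) :
    ∃ M : Subgroup G, IsCoatom M ∧ ∀ t ∈ S \ {s}, ConjClasses.mk t ∈ starSet M := by
  obtain ⟨σ, hσ⟩ := not_forall.1 hs
  set conj : G → G := fun g => (σ g)⁻¹ * g * σ g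
  have sup_eq_top : Subgroup.closure (conj '' (S \ {s})) ⊔ Subgroup.zpowers (conj s) = ⊤ := by
    rw [Subgroup.zpowers_eq_closure, ← Subgroup.closure_union, ← Set.image_singleton,
      ← Set.image_union, Set.sdiff_union_self, Set.image_union, Subgroup.closure_union, hS σ,
      top_sup_eq]
  obtain ⟨M, hM, hle⟩ :=
    exists_isCoatom_ge_of_sup_eq_top (isCompactElement_zpowers (conj s)) hσ sup_eq_top
  exact ⟨M, hM, fun t ht => mk_mem_starSet_iff.2
    ⟨σ t, hle (Subgroup.subset_closure (Set.mem_image_of_mem conj ht))⟩⟩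

theorem MinInvGen.exists_isCoatom_mk_mem_starSet_iff_ne (hS : MinInvGen S) {s : G} (hs : s ∈ S) :
    ∃ M : Subgroup G, IsCoatom M ∧ ∀ t ∈ S, ConjClasses.mk t ∈ starSet M ↔ t ≠ s := by
  obtain ⟨M, hM, hmem⟩ := hS.1.exists_isCoatom_of_not_invGen_sdiff_singleton
    (hS.2 _ (Set.sdiff_singleton_ssubset.2 hs))
  obtain ⟨u, hu, huM⟩ := hS.1.exists_mk_notMem_starSet hM.1
  obtain rfl : u = s := not_not.1 fun hne => huM (hmem u ⟨hu, hne⟩)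
  refine ⟨M, hM, fun t ht => ⟨?_, fun hne => hmem t ⟨ht, hne⟩⟩⟩
  rintro htM rfl
  exact huM htM

theorem MinInvGen.exists_indepFamily_encard_eq (hS : MinInvGen S) :
    ∃ F ⊆ maxStarFamily G, IndepFamily F ∧ F.encard = S.encard := by
  choose! M hcoatom hmem using fun s (hs : s ∈ S) => hS.exists_isCoatom_mk_mem_starSet_iff_ne hs
  have mem_iff_ne : ∀ s ∈ S, ∀ t ∈ S, ConjClasses.mk s ∈ starSet (M t) ↔ s ≠ t :=
    fun s hs t ht => hmem t ht s hs
  refine ⟨(fun s => starSet (M s)) '' S, ?_, indepFamily_image_of_mem_iff_ne mem_iff_ne,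
    (injOn_of_mem_iff_ne mem_iff_ne).encard_image⟩
  rintro _ ⟨s, hs, rfl⟩
  exact ⟨M s, hcoatom s hs, rfl⟩

end InvariableGeneration

theorem stmt10_general (G : Type*) [Group G]
    (hbdd : BddAbove {n : ℕ | ∃ F : Set (Set (ConjClasses G)),
      F ⊆ maxStarFamily G ∧ IndepFamily F ∧ F.ncard = n}) :
    mInv G ≤ iotaInv G := by
  refine csSup_le' ?_
  rintro _ ⟨S, hS, rfl⟩
  obtain ⟨F, hF, hindep, hcard⟩ := hS.exists_indepFamily_encard_eq
  exact le_csSup hbdd ⟨F, hF, hindep, congrArg ENat.toNat hcard⟩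

/-- For every finite group `G`, `m_I(G) ≤ ι(G)`. -/
theorem stmt10 (G : Type*) [Group G] [Finite G] :
    mInv G ≤ iotaInv G :=
  stmt10_general G (bddAbove_ncard_indepFamily (Set.toFinite _))
end

section
/- For every integer n ≥ 2, there exists a finite group G which is not invariable n-ary. -/
/-- The closure operator `C(X)`: the union of `X` with the intersection, over all
choices of conjugators (one for each element), of the subgroups generated by the
conjugated elements. -/
def copC {G : Type*} [Group G] (X : Set G) : Set G :=
  X ∪ ⋂ σ : G → G, (Subgroup.closure ((fun g => (σ g)⁻¹ * g * σ g) '' X) : Set G)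

/-- `C_n(X) = ⋃ {C(Y) : Y ⊆ X, |Y| ≤ n}`. -/
def copCn {G : Type*} [Group G] (n : ℕ) (X : Set G) : Set G :=
  ⋃ Y ∈ {Y : Set G | Y ⊆ X ∧ Y.ncard ≤ n}, copC Y

/-- The iterates `C_n^{k+1}(X)`: `copCnIter n X 0 = C_n(X)` and
`copCnIter n X (k+1) = C_n (copCnIter n X k)`. -/
def copCnIter {G : Type*} [Group G] (n : ℕ) (X : Set G) : ℕ → Set G
  | 0 => copCn n X
  | (k + 1) => copCn n (copCnIter n X k)

/-- `G` is invariable `n`-ary if `C(X) = ⋃_{k ≥ 1} C_n^k(X)` for every `X ⊆ G`. -/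
def InvariableNary (G : Type*) [Group G] (n : ℕ) : Prop :=
  ∀ X : Set G, copC X = ⋃ k : ℕ, copCnIter n X k

/-!
Take `G = S₃ ^ (2 ^ ι)`, with `S₃` realised as the dihedral group of order 6, and let `X` consist
of the constant function at a rotation `ρ` and, for each `i`, the function equal to a reflection
`σ` on the face `{A | i ∈ A}` of the cube `2 ^ ι` and trivial elsewhere.

The intersection `N(Y)` of the subgroups generated by conjugates of `Y` lies in the normal core of
every subgroup containing `Y`. Without its constant member, `X` lies in the functions with values
in `⟨σ⟩`; without the member of the face `i`, it lies in the functions that ignore whether `i ∈ A`.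
Both subgroups are core-free, so the iterates `C_n^k(X)` never leave `X ∪ {1}` once `n < |X|`.

On the other hand, a commutator of functions supported on two sets is supported on their
intersection, and `⁅s, r⁆ = r` for every conjugate `s` of `σ` and every conjugate `r` of `ρ`.
Iterated commutators therefore restrict any conjugate of the constant function to the intersection
of all the faces, which is a single vertex, so `N(X)` contains an element outside `X ∪ {1}`.
-/

open Set
open scoped commutatorElement

section InvCore

variable {G : Type*} [Group G] {X : Set G}

/-- The intersection, over all choices of conjugators (one for each element of `X`), of the
subgroups generated by the conjugated elements: the subgroup by which `copC` enlarges `X`. -/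
def invCore (X : Set G) : Subgroup G :=
  ⨅ σ : G → G, Subgroup.closure ((fun g => (σ g)⁻¹ * g * σ g) '' X)

lemma copC_eq_union_invCore (X : Set G) : copC X = X ∪ invCore X := by
  simp only [copC, invCore, Subgroup.coe_iInf]

lemma mem_invCore_of_forall {g : G}
    (h : ∀ (K : Subgroup G) (σ : G → G), (∀ x ∈ X, (σ x)⁻¹ * x * σ x ∈ K) → g ∈ K) :
    g ∈ invCore X :=
  Subgroup.mem_iInf.2 fun σ =>
    h _ σ fun _ hx => Subgroup.subset_closure (mem_image_of_mem _ hx)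

lemma invCore_le_normalCore {K : Subgroup G} (hXK : X ⊆ K) : invCore X ≤ K.normalCore := by
  intro f hf g
  have hconst : f ∈ Subgroup.closure ((fun x => g⁻¹ * x * g) '' X) :=
    Subgroup.mem_iInf.1 hf fun _ => g
  have hle : Subgroup.closure ((fun x => g⁻¹ * x * g) '' X)
      ≤ K.comap (MulAut.conj g).toMonoidHom := by
    rw [Subgroup.closure_le]
    rintro _ ⟨x, hx, rfl⟩
    simpa [mul_assoc] using hXK hx
  exact hle hconst

lemma copCn_subset_insert_one {n : ℕ} {Z : Set G} (hn : n < X.ncard)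
    (hX : ∀ x ∈ X, (Subgroup.closure (X \ {x})).normalCore = ⊥) (hZ : Z ⊆ insert 1 X) :
    copCn n Z ⊆ insert 1 X := by
  refine iUnion₂_subset fun Y ⟨hYZ, hYn⟩ => ?_
  have hY : Y ⊆ insert 1 X := hYZ.trans hZ
  have hYfin : Y.Finite := ((finite_of_ncard_pos (by omega)).insert 1).subset hY
  obtain ⟨x, hxX, hxY⟩ := exists_mem_notMem_of_ncard_lt_ncard (hYn.trans_lt hn) hYfin
  have hYclosure : Y ⊆ Subgroup.closure (X \ {x}) := by
    intro y hy
    rcases hY hy with rfl | hyX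
    · exact one_mem _
    · exact Subgroup.subset_closure ⟨hyX, fun hyx => hxY (hyx ▸ hy)⟩
  have hbot : invCore Y = ⊥ := le_bot_iff.1 (hX x hxX ▸ invCore_le_normalCore hYclosure)
  rw [copC_eq_union_invCore, hbot, Subgroup.coe_bot]
  exact union_subset hY (singleton_subset_iff.2 (mem_insert 1 X))

theorem not_invariableNary_of_normalCore_eq_bot {n : ℕ} {w : G} (hn : n < X.ncard)
    (hX : ∀ x ∈ X, (Subgroup.closure (X \ {x})).normalCore = ⊥) (hw : w ∈ invCore X)
    (hwX : w ∉ insert 1 X) : ¬ InvariableNary G n := by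
  have hiter (k : ℕ) : copCnIter n X k ⊆ insert 1 X := by
    induction k with
    | zero => exact copCn_subset_insert_one hn hX (subset_insert 1 X)
    | succ k ih => exact copCn_subset_insert_one hn hX ih
  intro hG
  have hwC : w ∈ copC X := copC_eq_union_invCore X ▸ Or.inr hw
  rw [hG X] at hwC
  exact hwX (iUnion_subset hiter hwC)

end InvCore

section CoreFree

lemma normalCore_pi_univ {α : Type*} {H : α → Type*} [∀ a, Group (H a)]
    (K : ∀ a, Subgroup (H a)) :
    (Subgroup.pi univ K).normalCore = Subgroup.pi univ fun a => (K a).normalCore := by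
  classical
  ext f
  refine ⟨fun hf a _ t => ?_, fun hf g a ha => hf a ha (g a)⟩
  simpa using hf (Pi.mulSingle a t) a (mem_univ a)

variable {α H : Type*} [Group H]

/-- The subgroup of the functions `α → H` that are unchanged by precomposition with `τ`; for `τ`
the flip of a coordinate of a cube, these are the functions independent of that coordinate. -/
def invariantFunctions (H : Type*) [Group H] (τ : α → α) : Subgroup (α → H) where
  carrier := {f | f ∘ τ = f}
  one_mem' := rfl
  mul_mem' hf hg := congrArg₂ (· * ·) hf hg
  inv_mem' hf := congrArg (·⁻¹) hf

lemma normalCore_invariantFunctions_eq_bot {τ : α → α} (hτ : ∀ a, τ a ≠ a)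
    (hH : Subgroup.center H = ⊥) : (invariantFunctions H τ).normalCore = ⊥ := by
  classical
  refine (Subgroup.eq_bot_iff_forall _).2 fun f hf => funext fun a => ?_
  have hfτ : f (τ a) = f a := congrFun (Subgroup.normalCore_le _ hf) a
  have hconj (t : H) : f a = t * f a * t⁻¹ := by
    -- Conjugating at `a` alone leaves the value at `τ a` untouched.
    simpa [hτ a, hfτ] using congrFun (hf (Pi.mulSingle a t)) a
  have hcenter : f a ∈ Subgroup.center H :=
    Subgroup.mem_center_iff.2 fun t => (eq_mul_inv_iff_mul_eq.1 (hconj t)).symm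
  rwa [hH, Subgroup.mem_bot] at hcenter

end CoreFree

section Indicator

variable {α H : Type*} [Group H]

lemma commutatorElement_mulIndicator (S T : Set α) (f g : α → H) :
    ⁅S.mulIndicator f, T.mulIndicator g⁆ = (S ∩ T).mulIndicator ⁅f, g⁆ := by
  classical
  ext a
  by_cases hS : a ∈ S <;> by_cases hT : a ∈ T <;> simp [commutatorElement_def, hS, hT]

lemma inv_mul_mulIndicator_mul (S : Set α) (f g : α → H) :
    g⁻¹ * S.mulIndicator f * g = S.mulIndicator (g⁻¹ * f * g) := by
  ext a
  by_cases hS : a ∈ S <;> simp [hS]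

lemma mulIndicator_biInter_mem {ι : Type*} {K : Subgroup (α → H)} {F : ι → Set α}
    {f : α → H} {g : ι → α → H} (hf : f ∈ K) (hg : ∀ i, (F i).mulIndicator (g i) ∈ K)
    (hgf : ∀ i, ⁅g i, f⁆ = f) (s : Finset ι) : (⋂ i ∈ s, F i).mulIndicator f ∈ K := by
  classical
  induction s using Finset.induction_on with
  | empty => simpa using hf
  | insert i s _ ih =>
    rw [Finset.set_biInter_insert, ← hgf i, ← commutatorElement_mulIndicator]
    exact Subgroup.commutator_le_self K (Subgroup.commutator_mem_commutator (hg i) ih)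

lemma mulIndicator_const_mem_of_mem_zpowers {K : Subgroup (α → H)} {S : Set α} {x y : H}
    (hxy : x ∈ Subgroup.zpowers y) (hy : S.mulIndicator (fun _ => y) ∈ K) :
    S.mulIndicator (fun _ => x) ∈ K := by
  obtain ⟨k, rfl⟩ := hxy
  convert K.zpow_mem hy k using 1
  ext a
  by_cases ha : a ∈ S <;> simp [ha]

end Indicator

section Cube

variable {ι H : Type*}

/-- The function on the cube `Set ι` with value `s` on the face `{A | i ∈ A}` and `1` elsewhere. -/
noncomputable def faceFunction [One H] (s : H) (i : ι) : Set ι → H :=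
  {A : Set ι | i ∈ A}.mulIndicator fun _ => s

/-- The functions on the cube `Set ι` given by the constant `r` and, for each face through the
vertex `univ`, the function with value `s` on that face. This is the set whose closure `copC` is
not reached by closing off its subsets with at most `|ι|` elements. -/
def constAndFaces [One H] (ι : Type*) (r s : H) : Set (Set ι → H) :=
  insert (fun _ => r) (range (faceFunction s))

lemma faceFunction_injective [One H] {s : H} (hs : s ≠ 1) :
    Function.Injective (faceFunction (ι := ι) s) := by
  intro i j hij
  by_contra hne
  exact hs (by simpa [faceFunction, Ne.symm hne] using congrFun hij {i})

lemma const_notMem_range_faceFunction [One H] {r s : H} (hrs : r ≠ s) :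
    (fun _ => r) ∉ range (faceFunction (ι := ι) s) := by
  rintro ⟨i, hi⟩
  exact hrs (by simpa [faceFunction] using (congrFun hi univ).symm)

lemma ncard_constAndFaces [One H] [Finite ι] {r s : H} (hs : s ≠ 1) (hrs : r ≠ s) :
    (constAndFaces ι r s).ncard = Nat.card ι + 1 := by
  rw [constAndFaces, ncard_insert_of_notMem (const_notMem_range_faceFunction hrs),
    ncard_range_of_injective (faceFunction_injective hs)]

lemma mulIndicator_vertex_notMem [One H] [Nonempty ι] {r s : H} (hr : r ≠ 1) (hrs : r ≠ s) :
    ({univ} : Set (Set ι)).mulIndicator (fun _ => r) ∉ insert 1 (constAndFaces ι r s) := by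
  rintro (h | h | ⟨i, h⟩)
  · exact hr (by simpa using congrFun h univ)
  · exact hr (by simpa [empty_ne_univ] using (congrFun h ∅).symm)
  · exact hrs (by simpa [faceFunction] using (congrFun h univ).symm)

variable [Group H]

lemma range_faceFunction_subset_pi (s : H) :
    range (faceFunction (ι := ι) s) ⊆
      (Subgroup.pi univ fun _ => Subgroup.zpowers s : Subgroup (Set ι → H)) := by
  rintro _ ⟨i, rfl⟩ A -
  by_cases hi : i ∈ A <;> simp [faceFunction, hi]

lemma constAndFaces_diff_subset_invariantFunctions (r s : H) (i : ι) :
    constAndFaces ι r s \ {faceFunction s i} ⊆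
      (invariantFunctions H fun A => symmDiff A {i} : Subgroup (Set ι → H)) := by
  rintro _ ⟨rfl | ⟨j, rfl⟩, hj⟩
  · rfl
  · have hji : j ≠ i := fun h => hj (h ▸ rfl)
    exact funext fun A => mulIndicator_const_eq_mulIndicator_const (by simp [mem_symmDiff, hji])

lemma normalCore_closure_constAndFaces_diff_eq_bot {r s : H} (hH : Subgroup.center H = ⊥)
    (hs : (Subgroup.zpowers s).normalCore = ⊥) :
    ∀ x ∈ constAndFaces ι r s, (Subgroup.closure (constAndFaces ι r s \ {x})).normalCore = ⊥ := by
  rintro _ (rfl | ⟨i, rfl⟩) <;> rw [← le_bot_iff]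
  · have hle : Subgroup.closure (constAndFaces ι r s \ {fun _ => r}) ≤
        Subgroup.pi univ fun _ => Subgroup.zpowers s :=
      (Subgroup.closure_le _).2
        ((sdiff_singleton_subset_iff.2 subset_rfl).trans (range_faceFunction_subset_pi s))
    calc _ ≤ (Subgroup.pi univ fun _ => Subgroup.zpowers s).normalCore :=
          Subgroup.normalCore_mono hle
      _ = ⊥ := by simp only [normalCore_pi_univ, hs, Subgroup.pi_bot]
  · have hflip (A : Set ι) : symmDiff A {i} ≠ A := by simp
    rw [← normalCore_invariantFunctions_eq_bot hflip hH]
    exact Subgroup.normalCore_mono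
      ((Subgroup.closure_le _).2 (constAndFaces_diff_subset_invariantFunctions r s i))

lemma mulIndicator_vertex_mem_invCore [Finite ι] {r s : H}
    (hcomm : ∀ x y, IsConj s x → IsConj r y → ⁅x, y⁆ = y)
    (hr : ∀ y, IsConj r y → r ∈ Subgroup.zpowers y) :
    ({univ} : Set (Set ι)).mulIndicator (fun _ => r) ∈ invCore (constAndFaces ι r s) := by
  have := Fintype.ofFinite ι
  refine mem_invCore_of_forall fun K σ hσ => ?_
  have hconj (t u : H) : IsConj t (u⁻¹ * t * u) := isConj_iff.2 ⟨u⁻¹, by rw [inv_inv]⟩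
  let c : Set ι → H := fun _ => r
  let c' : Set ι → H := (σ c)⁻¹ * c * σ c
  let g (i : ι) : Set ι → H :=
    (σ (faceFunction s i))⁻¹ * (fun _ => s) * σ (faceFunction s i)
  have hc' : c' ∈ K := hσ c (mem_insert _ _)
  have hg (i : ι) : {A : Set ι | i ∈ A}.mulIndicator (g i) ∈ K := by
    rw [← inv_mul_mulIndicator_mul]
    exact hσ _ (Or.inr (mem_range_self i))
  have hgc' (i : ι) : ⁅g i, c'⁆ = c' := funext fun A => hcomm _ _ (hconj _ _) (hconj _ _)
  have hvertex : ⋂ i ∈ (Finset.univ : Finset ι), {A : Set ι | i ∈ A} = {univ} := by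
    ext A
    simp [eq_univ_iff_forall]
  have hmem : ({univ} : Set (Set ι)).mulIndicator c' ∈ K :=
    hvertex ▸ mulIndicator_biInter_mem hc' hg hgc' Finset.univ
  have hconst : ({univ} : Set (Set ι)).mulIndicator c' =
      ({univ} : Set (Set ι)).mulIndicator fun _ => c' univ :=
    mulIndicator_congr fun A hA => congrArg c' hA
  exact mulIndicator_const_mem_of_mem_zpowers (hr _ (hconj _ _)) (hconst ▸ hmem)

end Cube

section Dihedral

open DihedralGroup

variable {n : ℕ}

lemma commutatorElement_sr_r (i j : ZMod n) : ⁅sr i, r j⁆ = r (-2 * j) := by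
  simp only [commutatorElement_def, inv_sr, inv_r, sr_mul_r, sr_mul_sr, r_mul_r]
  ring_nf

lemma exists_eq_sr_of_isConj_sr {i : ZMod n} {x : DihedralGroup n} (h : IsConj (sr i) x) :
    ∃ j, x = sr j := by
  obtain ⟨g | g, rfl⟩ := isConj_iff.1 h <;> simp

lemma eq_r_or_eq_r_neg_of_isConj_r {i : ZMod n} {y : DihedralGroup n} (h : IsConj (r i) y) :
    y = r i ∨ y = r (-i) := by
  obtain ⟨g | g, rfl⟩ := isConj_iff.1 h <;> simp

lemma r_mem_zpowers_of_isConj_r {i : ZMod n} {y : DihedralGroup n} (h : IsConj (r i) y) :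
    r i ∈ Subgroup.zpowers y := by
  rcases eq_r_or_eq_r_neg_of_isConj_r h with rfl | rfl
  · exact Subgroup.mem_zpowers _
  · rw [← inv_r, Subgroup.zpowers_inv]
    exact Subgroup.mem_zpowers _

lemma eq_one_or_eq_sr_of_mem_zpowers_sr {i : ZMod n} {x : DihedralGroup n}
    (hx : x ∈ Subgroup.zpowers (sr i)) : x = 1 ∨ x = sr i := by
  obtain ⟨k, rfl⟩ := hx
  obtain ⟨m, rfl | rfl⟩ := k.even_or_odd' <;> simp [zpow_add, zpow_mul, sq]

lemma normalCore_zpowers_sr_eq_bot (hn : (2 : ZMod n) ≠ 0) (i : ZMod n) :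
    (Subgroup.zpowers (sr i)).normalCore = ⊥ := by
  refine (Subgroup.eq_bot_iff_forall _).2 fun x hx => ?_
  rcases eq_one_or_eq_sr_of_mem_zpowers_sr (Subgroup.normalCore_le _ hx) with rfl | rfl
  · rfl
  · have hrot : r (-1) * sr i * (r (-1))⁻¹ = sr (i + 2) := by
      rw [r_mul_sr, inv_r, sr_mul_r]
      ring_nf
    have hmem : sr (i + 2) ∈ Subgroup.zpowers (sr i) := hrot ▸ hx (r (-1))
    have hfixed : sr (i + 2) = sr i :=
      (eq_one_or_eq_sr_of_mem_zpowers_sr hmem).resolve_left nofun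
    exact absurd (by simpa using hfixed) hn

lemma commutatorElement_eq_right_of_isConj_sr_of_isConj_r {i j : ZMod 3} {x y : DihedralGroup 3}
    (hx : IsConj (sr i) x) (hy : IsConj (r j) y) : ⁅x, y⁆ = y := by
  have hthree (k : ZMod 3) : -2 * k = k := by decide +revert
  obtain ⟨i', rfl⟩ := exists_eq_sr_of_isConj_sr hx
  rcases eq_r_or_eq_r_neg_of_isConj_r hy with rfl | rfl <;>
    rw [commutatorElement_sr_r, hthree]

end Dihedral

open DihedralGroup in
theorem stmt13_general {ι : Type*} [Finite ι] [Nonempty ι] {n : ℕ} (hn : n ≤ Nat.card ι) :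
    ¬ InvariableNary (Set ι → DihedralGroup 3) n := by
  have hr : (r 1 : DihedralGroup 3) ≠ 1 := by decide
  have hs : (sr 0 : DihedralGroup 3) ≠ 1 := by decide
  have hrs : (r 1 : DihedralGroup 3) ≠ sr 0 := by decide
  refine not_invariableNary_of_normalCore_eq_bot (X := constAndFaces ι (r 1) (sr 0)) ?_
    (normalCore_closure_constAndFaces_diff_eq_bot ?_ ?_) (mulIndicator_vertex_mem_invCore ?_ ?_)
    (mulIndicator_vertex_notMem hr hrs)
  · rw [ncard_constAndFaces hs hrs]
    exact Nat.lt_succ_of_le hn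
  · exact center_eq_bot_of_odd_ne_one (by decide) (by decide)
  · exact normalCore_zpowers_sr_eq_bot (by decide) 0
  · exact fun _ _ => commutatorElement_eq_right_of_isConj_sr_of_isConj_r
  · exact fun _ => r_mem_zpowers_of_isConj_r

/-- For every integer `n ≥ 2` there is a finite group which is not
invariable `n`-ary. -/
theorem stmt13 (n : ℕ) (hn : 2 ≤ n) :
    ∃ (G : Type) (instG : Group G), Finite G ∧ ¬ @InvariableNary G instG n := by
  have : Nonempty (Fin n) := ⟨0, by omega⟩
  exact ⟨Set (Fin n) → DihedralGroup 3, inferInstance, inferInstance,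
    stmt13_general (Nat.card_fin n).ge⟩
end

section
/- Let G be a finite group. Then Φ_I(G) coincides with the set of elements of G that can be dropped from any invariable generating set; that is, Φ_I(G) = {x ∈ G : for every subset X of G, if {x} ∪ X invariably generates G then X invariably generates G}. -/
/-- `Σ(G)`: the maximal members, under inclusion, of the family of unions of
conjugates of proper subgroups of `G`. -/
def sigmaInv (G : Type*) [Group G] : Set (Set G) :=
  {X | (∃ M : Subgroup G, M ≠ ⊤ ∧ X = conjUnion M) ∧
    ∀ Y : Set G, (∃ M : Subgroup G, M ≠ ⊤ ∧ Y = conjUnion M) → X ⊆ Y → X = Y}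

/-- `Φ_I(G)`: the intersection of the members of `Σ(G)`. -/
def phiInv (G : Type*) [Group G] : Set G :=
  ⋂ X ∈ sigmaInv G, X

/-!
A set fails to invariably generate `G` exactly when it lies in `M̃` for some proper subgroup `M`.
When every such `M̃` lies in a member of `Σ(G)`, as maximality guarantees for finite `G`, the sets
that invariably generate `G` are those contained in no member of `Σ(G)`. So an element common to all
members can always be dropped; conversely, if `x` misses `X ∈ Σ(G)`, then `{x} ∪ X` invariably
generates `G` by maximality of `X`, while `X` does not.
-/

section

variable {G : Type*} [Group G] {S X : Set G}

theorem mem_conjUnion_iff {M : Subgroup G} {x : G} :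
    x ∈ conjUnion M ↔ ∃ g : G, g⁻¹ * x * g ∈ M := by
  rw [conjUnion, Set.mem_iUnion]
  constructor
  · rintro ⟨g, m, hm, rfl⟩
    exact ⟨g⁻¹, by simpa [mul_assoc] using hm⟩
  · rintro ⟨g, hg⟩
    exact ⟨g⁻¹, g⁻¹ * x * g, hg, by group⟩

theorem invGen_iff_forall_not_subset_conjUnion :
    InvGen S ↔ ∀ M : Subgroup G, M ≠ ⊤ → ¬ S ⊆ conjUnion M := by
  constructor
  · intro hS M hM hSM
    have exists_conj_mem : ∀ s ∈ S, ∃ g : G, g⁻¹ * s * g ∈ M :=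
      fun s hs => mem_conjUnion_iff.1 (hSM hs)
    choose! σ hσ using exists_conj_mem
    have closure_le : Subgroup.closure ((fun s => (σ s)⁻¹ * s * σ s) '' S) ≤ M :=
      (Subgroup.closure_le M).2 (Set.image_subset_iff.2 hσ)
    exact hM (top_le_iff.1 ((hS σ).ge.trans closure_le))
  · intro hS σ
    by_contra hne
    exact hS _ hne fun s hs =>
      mem_conjUnion_iff.2 ⟨σ s, Subgroup.subset_closure (Set.mem_image_of_mem _ hs)⟩

theorem mem_sigmaInv_iff_maximal :
    X ∈ sigmaInv G ↔ Maximal (fun Y => ∃ M : Subgroup G, M ≠ ⊤ ∧ Y = conjUnion M) X := by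
  rw [maximal_iff]
  rfl

theorem exists_mem_sigmaInv_conjUnion_subset [Finite G] {M : Subgroup G} (hM : M ≠ ⊤) :
    ∃ X ∈ sigmaInv G, conjUnion M ⊆ X := by
  obtain ⟨X, hMX, hX⟩ := (Set.toFinite
    {Y : Set G | ∃ N : Subgroup G, N ≠ ⊤ ∧ Y = conjUnion N}).exists_le_maximal ⟨M, hM, rfl⟩
  exact ⟨X, mem_sigmaInv_iff_maximal.2 hX, hMX⟩

theorem InvGen.not_subset_of_mem_sigmaInv (hS : InvGen S) (hX : X ∈ sigmaInv G) : ¬ S ⊆ X := by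
  obtain ⟨⟨M, hM, rfl⟩, -⟩ := hX
  exact invGen_iff_forall_not_subset_conjUnion.1 hS M hM

theorem invGen_iff_forall_mem_sigmaInv
    (h : ∀ M : Subgroup G, M ≠ ⊤ → ∃ X ∈ sigmaInv G, conjUnion M ⊆ X) :
    InvGen S ↔ ∀ X ∈ sigmaInv G, ¬ S ⊆ X := by
  refine ⟨fun hS X hX => hS.not_subset_of_mem_sigmaInv hX, fun hS => ?_⟩
  refine invGen_iff_forall_not_subset_conjUnion.2 fun M hM hSM => ?_
  obtain ⟨X, hX, hMX⟩ := h M hM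
  exact hS X hX (hSM.trans hMX)

theorem invGen_of_ssubset_of_mem_sigmaInv (hX : X ∈ sigmaInv G) (hXS : X ⊂ S) : InvGen S :=
  invGen_iff_forall_not_subset_conjUnion.2 fun M hM hSM =>
    (mem_sigmaInv_iff_maximal.1 hX).not_prop_of_ssuperset (hXS.trans_subset hSM) ⟨M, hM, rfl⟩

theorem InvGen.of_singleton_union {x : G}
    (h : ∀ M : Subgroup G, M ≠ ⊤ → ∃ X ∈ sigmaInv G, conjUnion M ⊆ X)
    (hx : x ∈ phiInv G) (hS : InvGen ({x} ∪ S)) : InvGen S :=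
  (invGen_iff_forall_mem_sigmaInv h).2 fun X hX hSX =>
    hS.not_subset_of_mem_sigmaInv hX <|
      Set.union_subset (Set.singleton_subset_iff.2 (Set.mem_iInter₂.1 hx X hX)) hSX

theorem mem_phiInv_of_forall_invGen {x : G}
    (hx : ∀ S : Set G, InvGen ({x} ∪ S) → InvGen S) : x ∈ phiInv G := by
  refine Set.mem_iInter₂.2 fun X hX => ?_
  by_contra hxX
  have invGen_union : InvGen ({x} ∪ X) :=
    invGen_of_ssubset_of_mem_sigmaInv hX (Set.ssubset_insert hxX)
  exact (hx X invGen_union).not_subset_of_mem_sigmaInv hX subset_rfl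

end

theorem stmt16_general (G : Type*) [Group G]
    (h : ∀ M : Subgroup G, M ≠ ⊤ → ∃ X ∈ sigmaInv G, conjUnion M ⊆ X) :
    phiInv G = {x : G | ∀ X : Set G, InvGen ({x} ∪ X) → InvGen X} :=
  Set.Subset.antisymm (fun _ hx _ hX => hX.of_singleton_union h hx)
    fun _ hx => mem_phiInv_of_forall_invGen hx

/-- `Φ_I(G)` is the set of elements that can be dropped from any
invariable generating set of `G`. -/
theorem stmt16 (G : Type*) [Group G] [Finite G] :
    phiInv G = {x : G | ∀ X : Set G, InvGen ({x} ∪ X) → InvGen X} :=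
  stmt16_general G fun _ hM => exists_mem_sigmaInv_conjUnion_subset hM
end
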